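/- Under the stated Q-learning family setting, the following two claims hold. (i) For every d ∈ 𝔇 there exists a unique function Q_d : 𝕏_d × A → ℝ which is (𝒳_d ⊗ 2^A)/ℬ(ℝ)-measurable and satisfies for all (x,a) ∈ 𝕏_d × A that sup_{y∈𝕏_d} max_{b∈A}|Q_d(y,b)| / ω_d(y) < ∞, E[|max_{b∈A} Q_d(X_d^{0,x,a}, b)|] < ∞, and Q_d(x,a) = g_d(x,a) + δ_d E[max_{b∈A} Q_d(X_d^{0,x,a}, b)]. (ii) There exist N : (0,1] → ℕ and c ∈ ℝ such that for all d ∈ 𝔇 and ε ∈ (0,1] it holds that 𝔠_{N_ε, d} ≤ c ℜ_d ε^{−c} and sup_{x∈𝕏_d} (E[max_{a∈A}|Q_d(x,a) − Q_{N_ε, d}^0(x,a)|²] / ω_d(x)²)^{1/2} ≤ ε. -/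

import Mathlib

/-!
**Bellman equations.** In the `w`-weighted supremum distance the Bellman operator is a contraction
with factor `lam * δ ≤ s < 1`, because the second moment bound controls `E[w(X)]` by `lam * w`.
Picard iteration from `0` gives the solution `q` and iterated contraction gives uniqueness
(`exists_bellman_fixed`, `bellman_fixed_unique`).

**Laws of the iterates.** The iterate `Q n θ` is a random field measurable with respect to the
noise indexed by proper extensions of `θ`, and distinct samples use disjoint blocks of that index
tree, hence independent noise. Since the field at an independent random point can be integrated by
freezing the point, induction on `n` shows that the law of the field `Q n θ` does not depend on `θ`
(`identDistrib_Q`).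

**Error recursion.** Let `e n` bound the weighted `L²` error of level `n`. The mean of the `l`-th
correction is a difference of level means, so the sum of the means telescopes and the bias of level
`n + 1` is at most `s * e n`. The centred `l`-th correction is an average of `M ^ (n + 1 - l)`
pairwise independent terms of size `lam * (e l + e (l - 1))`, and bounding the maximum over `A` by
the sum costs a factor `card A`. With `m = M ^ (-1/2)` this reads
`e (n + 1) ≤ s * e n + s * card A * ∑ l ≤ n, m ^ (n + 1 - l) * (e l + e (l - 1))`,
where the bracket for `l = 0` is read as `κ`.
The ansatz `e n = K * r ^ n` satisfies it whenever `m < r` and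
`s * (r - m) + card A * s * (r + 1) * m ≤ r * (r - m)` (`Problem.err_le`). At `r = 1` the strict
form of this inequality is exactly the lower bound assumed on `M`, so by continuity some `r < 1`
works (`exists_rate`).

**Cost.** The cost recursion gives `C n ≤ R * (4 * M) ^ n` (`cost_le`). Reaching accuracy `ε` takes
about `log (1 / ε) / log (1 / r)` levels, and the cost is therefore polynomial in `1 / ε`
(`exists_level`). The constants depend only on `κ`, `s`, `M`, `card A` and not on `d`.
-/

namespace MLFP

open MeasureTheory ProbabilityTheory Filter Topology
open scoped ENNReal

set_option linter.unusedSectionVars false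

/-! ### Finite maxima and second moments -/

section Basics

variable {A : Type*} [Fintype A] [Nonempty A]

lemma abs_iSup_sub_iSup_le {f g : A → ℝ} {c : ℝ} (h : ∀ b, |f b - g b| ≤ c) :
    |(⨆ b, f b) - ⨆ b, g b| ≤ c := by
  rw [abs_sub_le_iff]
  constructor
  · rw [sub_le_iff_le_add]
    refine ciSup_le fun b => ?_
    have h1 := (abs_le.1 (h b)).2
    have h2 := le_ciSup (Set.finite_range g).bddAbove b
    linarith
  · rw [sub_le_iff_le_add]
    refine ciSup_le fun b => ?_
    have h1 := (abs_le.1 (h b)).1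
    have h2 := le_ciSup (Set.finite_range f).bddAbove b
    linarith

lemma le_iSup_abs (f : A → ℝ) (b : A) : |f b| ≤ ⨆ a, |f a| :=
  le_ciSup (f := fun a => |f a|) (Set.finite_range _).bddAbove b

lemma abs_iSup_le {f : A → ℝ} {c : ℝ} (h : ∀ b, |f b| ≤ c) : |⨆ b, f b| ≤ c := by
  have := abs_iSup_sub_iSup_le (f := f) (g := fun _ => 0) (c := c) (by simpa using h)
  simpa using this

variable {Ω : Type*} [mΩ : MeasurableSpace Ω] {μ : Measure Ω}

lemma eLpNorm_two_sq (f : Ω → ℝ) :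
    eLpNorm f 2 μ ^ 2 = ∫⁻ ω, ENNReal.ofReal (f ω ^ 2) ∂μ := by
  rw [eLpNorm_eq_lintegral_rpow_enorm_toReal two_ne_zero ENNReal.ofNat_ne_top,
    ← ENNReal.rpow_two, ← ENNReal.rpow_mul]
  norm_num
  refine lintegral_congr fun ω => ?_
  rw [← ofReal_norm, ← ENNReal.ofReal_pow (norm_nonneg _), Real.norm_eq_abs, sq_abs]

lemma eLpNorm_two_le_iff {f : Ω → ℝ} {c : ℝ} (hc : 0 ≤ c) :
    eLpNorm f 2 μ ≤ ENNReal.ofReal c ↔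
      (∫⁻ ω, ENNReal.ofReal (f ω ^ 2) ∂μ) ≤ ENNReal.ofReal (c ^ 2) := by
  rw [← eLpNorm_two_sq, ENNReal.ofReal_pow hc, ENNReal.pow_le_pow_left_iff two_ne_zero]

lemma abs_integral_le_of_eLpNorm_two [IsProbabilityMeasure μ] {f : Ω → ℝ} {c : ℝ} (hc : 0 ≤ c)
    (hf : AEStronglyMeasurable f μ) (h : eLpNorm f 2 μ ≤ ENNReal.ofReal c) :
    |∫ ω, f ω ∂μ| ≤ c := by
  have h1 : eLpNorm f 1 μ ≤ ENNReal.ofReal c :=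
    (eLpNorm_le_eLpNorm_of_exponent_le (by norm_num) hf).trans h
  rw [eLpNorm_one_eq_lintegral_enorm] at h1
  have h2 := (enorm_integral_le_lintegral_enorm f).trans h1
  rw [← ofReal_norm, ENNReal.ofReal_le_ofReal_iff hc] at h2
  exact h2

end Basics

/-! ### The Bellman fixed point -/

section Bellman

variable {A : Type*} [Fintype A] [Nonempty A]
variable {Ω : Type*} [mΩ : MeasurableSpace Ω] {μ : Measure Ω} [IsProbabilityMeasure μ]
variable {S : Type*} [MeasurableSpace S]

/-- The Bellman operator with one-step transition `X`, discount `δ` and reward `g`. -/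
noncomputable def bellman (μ : Measure Ω) (X : S → A → Ω → S) (δ : ℝ) (g : S → A → ℝ)
    (u : S → A → ℝ) : S → A → ℝ :=
  fun x a => g x a + δ * ∫ ω, ⨆ b : A, u (X x a ω) b ∂μ

lemma measurable_bellman {X : S → A → Ω → S} {δ : ℝ} {g u : S → A → ℝ}
    (hX : ∀ a, Measurable fun p : S × Ω => X p.1 a p.2)
    (hg : ∀ a, Measurable fun x => g x a) (hu : ∀ a, Measurable fun x => u x a) (a : A) :
    Measurable fun x => bellman μ X δ g u x a := by
  refine (hg a).add (Measurable.const_mul ?_ δ)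
  have h : Measurable fun p : S × Ω => ⨆ b : A, u (X p.1 a p.2) b :=
    Measurable.iSup fun b => (hu b).comp (hX a)
  exact (h.stronglyMeasurable.integral_prod_right').measurable

variable {X : S → A → Ω → S} {lam δ : ℝ} {w : S → ℝ}

lemma integrable_weight (hX : ∀ a, Measurable fun p : S × Ω => X p.1 a p.2)
    (hw : Measurable w) (hw0 : ∀ x, 0 < w x) (hlam : 0 ≤ lam)
    (hmom : ∀ x a, (∫⁻ ω, ENNReal.ofReal (w (X x a ω) ^ 2) ∂μ)
      ≤ ENNReal.ofReal ((lam * w x) ^ 2)) (x : S) (a : A) :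
    Integrable (fun ω => w (X x a ω)) μ ∧ ∫ ω, w (X x a ω) ∂μ ≤ lam * w x := by
  have hm : Measurable fun ω => w (X x a ω) :=
    hw.comp ((hX a).comp measurable_prodMk_left)
  have h0 : 0 ≤ lam * w x := mul_nonneg hlam (hw0 x).le
  have h := (eLpNorm_two_le_iff h0).2 (hmom x a)
  have hL : MemLp (fun ω => w (X x a ω)) 2 μ :=
    ⟨hm.aestronglyMeasurable, h.trans_lt ENNReal.ofReal_lt_top⟩
  exact ⟨hL.integrable (by norm_num),
    (le_abs_self _).trans (abs_integral_le_of_eLpNorm_two h0 hm.aestronglyMeasurable h)⟩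

lemma integrable_iSup_comp (hX : ∀ a, Measurable fun p : S × Ω => X p.1 a p.2)
    (hwX : ∀ x a, Integrable (fun ω => w (X x a ω)) μ)
    {u : S → A → ℝ} (hu : ∀ a, Measurable fun x => u x a) {K : ℝ}
    (huK : ∀ x a, |u x a| ≤ K * w x) (x : S) (a : A) :
    Integrable (fun ω => ⨆ b : A, u (X x a ω) b) μ := by
  have hm : Measurable fun ω => ⨆ b : A, u (X x a ω) b :=
    Measurable.iSup fun b => (hu b).comp ((hX a).comp measurable_prodMk_left)
  refine ((hwX x a).const_mul K).mono' hm.aestronglyMeasurable (Eventually.of_forall fun ω => ?_)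
  exact abs_iSup_le fun b => huK _ b

/-- The Bellman operator contracts the `w`-weighted supremum distance with factor `s ≥ λ δ`. -/
lemma bellman_contract (hX : ∀ a, Measurable fun p : S × Ω => X p.1 a p.2)
    (hw : Measurable w) (hw0 : ∀ x, 0 < w x) (hlam : 0 ≤ lam) (hδ : 0 ≤ δ)
    (hmom : ∀ x a, (∫⁻ ω, ENNReal.ofReal (w (X x a ω) ^ 2) ∂μ)
      ≤ ENNReal.ofReal ((lam * w x) ^ 2)) {s : ℝ} (hs : lam * δ ≤ s)
    {g u v : S → A → ℝ} (hu : ∀ a, Measurable fun x => u x a)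
    (hv : ∀ a, Measurable fun x => v x a) {Ku Kv K : ℝ} (hK : 0 ≤ K)
    (huK : ∀ x a, |u x a| ≤ Ku * w x) (hvK : ∀ x a, |v x a| ≤ Kv * w x)
    (huv : ∀ x a, |u x a - v x a| ≤ K * w x) (x : S) (a : A) :
    |bellman μ X δ g u x a - bellman μ X δ g v x a| ≤ s * K * w x := by
  have hwX := integrable_weight hX hw hw0 hlam hmom
  have iu := integrable_iSup_comp hX (fun x a => (hwX x a).1) hu huK x a
  have iv := integrable_iSup_comp hX (fun x a => (hwX x a).1) hv hvK x a
  have e : bellman μ X δ g u x a - bellman μ X δ g v x a =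
      δ * ∫ ω, ((⨆ b : A, u (X x a ω) b) - ⨆ b : A, v (X x a ω) b) ∂μ := by
    rw [integral_sub iu iv]; simp only [bellman]; ring
  have h1 : |∫ ω, ((⨆ b : A, u (X x a ω) b) - ⨆ b : A, v (X x a ω) b) ∂μ| ≤
      ∫ ω, K * w (X x a ω) ∂μ := by
    rw [← Real.norm_eq_abs]
    refine norm_integral_le_of_norm_le ((hwX x a).1.const_mul K)
      (Eventually.of_forall fun ω => ?_)
    rw [Real.norm_eq_abs]
    exact abs_iSup_sub_iSup_le fun b => huv _ b
  rw [integral_const_mul] at h1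
  rw [e, abs_mul, abs_of_nonneg hδ]
  calc _ ≤ δ * (K * (lam * w x)) := by
        gcongr; exact h1.trans (by gcongr; exact (hwX x a).2)
    _ = lam * δ * (K * w x) := by ring
    _ ≤ s * (K * w x) := by
        have := (hw0 x).le
        gcongr
    _ = _ := by ring

/-- Existence of the Bellman solution by Picard iteration from `0`. -/
lemma exists_bellman_fixed (hX : ∀ a, Measurable fun p : S × Ω => X p.1 a p.2)
    (hw : Measurable w) (hw0 : ∀ x, 0 < w x) (hlam : 0 ≤ lam) (hδ : 0 ≤ δ)
    (hmom : ∀ x a, (∫⁻ ω, ENNReal.ofReal (w (X x a ω) ^ 2) ∂μ)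
      ≤ ENNReal.ofReal ((lam * w x) ^ 2)) {s : ℝ} (hs : lam * δ ≤ s) (hs1 : s < 1)
    {g : S → A → ℝ} (hg : ∀ a, Measurable fun x => g x a) {κ : ℝ} (hκ : 0 ≤ κ)
    (hgκ : ∀ x a, |g x a| ≤ κ * w x) :
    ∃ q : S → A → ℝ, (∀ a, Measurable fun x => q x a) ∧
      (∀ x a, |q x a| ≤ κ / (1 - s) * w x) ∧ ∀ x a, q x a = bellman μ X δ g q x a := by
  have hs0 : 0 ≤ s := (mul_nonneg hlam hδ).trans hs
  let u : ℕ → S → A → ℝ := fun n => (bellman μ X δ g)^[n] 0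
  have u_succ : ∀ n, u (n + 1) = bellman μ X δ g (u n) := fun n =>
    Function.iterate_succ_apply' _ _ _
  have u_meas : ∀ n a, Measurable fun x => u n x a := by
    intro n
    induction n with
    | zero => intro a; exact measurable_const
    | succ n ih => rw [u_succ]; exact measurable_bellman hX hg ih
  have u_step : ∀ n, (∃ K, ∀ x a, |u n x a| ≤ K * w x) ∧
      ∀ x a, |u n x a - u (n + 1) x a| ≤ κ * s ^ n * w x := by
    intro n
    induction n with
    | zero =>
      refine ⟨⟨0, fun x a => by simp [u]⟩, fun x a => ?_⟩
      have : u 1 x a = g x a := by simp [u, bellman]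
      rw [zero_add, this]
      simpa [u] using hgκ x a
    | succ n ih =>
      obtain ⟨⟨K, hK⟩, h2⟩ := ih
      have hK' : ∀ x a, |u (n + 1) x a| ≤ (K + κ * s ^ n) * w x := fun x a => by
        have h3 := abs_sub_abs_le_abs_sub (u (n + 1) x a) (u n x a)
        rw [abs_sub_comm] at h3
        have := hK x a; have := h2 x a
        linarith
      refine ⟨⟨_, hK'⟩, fun x a => ?_⟩
      have h4 := bellman_contract (μ := μ) (g := g) hX hw hw0 hlam hδ hmom hs (u_meas n)
        (u_meas (n + 1)) (K := κ * s ^ n) (by positivity) hK hK' h2 x a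
      rw [← u_succ, ← u_succ] at h4
      calc _ ≤ _ := h4
        _ = _ := by ring
  have hdist : ∀ x a n, dist (u n x a) (u (n + 1) x a) ≤ κ * w x * s ^ n := fun x a n => by
    rw [Real.dist_eq]
    exact ((u_step n).2 x a).trans (le_of_eq (by ring))
  have hlim : ∀ x a, ∃ y, Tendsto (fun n => u n x a) atTop (𝓝 y) := fun x a =>
    cauchySeq_tendsto_of_complete (cauchySeq_of_le_geometric s _ hs1 (hdist x a))
  choose q hq using hlim
  have q_meas : ∀ a, Measurable fun x => q x a := fun a =>
    measurable_of_tendsto_metrizable (fun n => u_meas n a) (tendsto_pi_nhds.2 fun x => hq x a)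
  have q_dist : ∀ n x a, |u n x a - q x a| ≤ κ / (1 - s) * s ^ n * w x := fun n x a => by
    have := dist_le_of_le_geometric_of_tendsto s _ hs1 (hdist x a) (hq x a) n
    rw [Real.dist_eq] at this
    exact this.trans (le_of_eq (by ring))
  have q_bd : ∀ x a, |q x a| ≤ κ / (1 - s) * w x := fun x a => by
    simpa [u] using q_dist 0 x a
  refine ⟨q, q_meas, q_bd, fun x a => ?_⟩
  have h1 : Tendsto (fun n => u (n + 1) x a) atTop (𝓝 (q x a)) :=
    (hq x a).comp (tendsto_add_atTop_nat 1)
  have hs' : 0 < 1 - s := by linarith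
  have h2 : Tendsto (fun n => u (n + 1) x a) atTop (𝓝 (bellman μ X δ g q x a)) := by
    rw [tendsto_iff_dist_tendsto_zero]
    have h3 : Tendsto (fun n : ℕ => s * (κ / (1 - s) * s ^ n) * w x) atTop (𝓝 0) := by
      have := (tendsto_pow_atTop_nhds_zero_of_lt_one hs0 hs1).const_mul (s * (κ / (1 - s)) * w x)
      rw [mul_zero] at this
      refine this.congr fun n => by ring
    refine squeeze_zero (fun _ => dist_nonneg) (fun n => ?_) h3
    rw [Real.dist_eq, u_succ]
    obtain ⟨K, hK⟩ := (u_step n).1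
    exact bellman_contract (μ := μ) (g := g) hX hw hw0 hlam hδ hmom hs (u_meas n) q_meas
      (K := κ / (1 - s) * s ^ n) (by positivity) hK q_bd (q_dist n) x a
  exact tendsto_nhds_unique h1 h2

/-- Two fixed points with finite weighted sup norm agree: iterating the contraction estimate shows
that their distance is at most a multiple of `s ^ n` for every `n`. -/
lemma bellman_fixed_unique (hX : ∀ a, Measurable fun p : S × Ω => X p.1 a p.2)
    (hw : Measurable w) (hw0 : ∀ x, 0 < w x) (hlam : 0 ≤ lam) (hδ : 0 ≤ δ)
    (hmom : ∀ x a, (∫⁻ ω, ENNReal.ofReal (w (X x a ω) ^ 2) ∂μ)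
      ≤ ENNReal.ofReal ((lam * w x) ^ 2)) {s : ℝ} (hs : lam * δ ≤ s) (hs1 : s < 1)
    {g u v : S → A → ℝ} (hu : ∀ a, Measurable fun x => u x a)
    (hv : ∀ a, Measurable fun x => v x a) {Ku Kv : ℝ}
    (huK : ∀ x a, |u x a| ≤ Ku * w x) (hvK : ∀ x a, |v x a| ≤ Kv * w x)
    (hu' : ∀ x a, u x a = bellman μ X δ g u x a) (hv' : ∀ x a, v x a = bellman μ X δ g v x a) :
    u = v := by
  have hs0 : 0 ≤ s := (mul_nonneg hlam hδ).trans hs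
  have key : ∀ n : ℕ, ∀ x a, |u x a - v x a| ≤ (|Ku| + |Kv|) * s ^ n * w x := by
    intro n
    induction n with
    | zero =>
      intro x a
      have h1 := abs_sub (u x a) (v x a)
      have h2 := (huK x a).trans (mul_le_mul_of_nonneg_right (le_abs_self Ku) (hw0 x).le)
      have h3 := (hvK x a).trans (mul_le_mul_of_nonneg_right (le_abs_self Kv) (hw0 x).le)
      simp only [pow_zero, mul_one, add_mul]
      linarith
    | succ n ih =>
      intro x a
      have := bellman_contract (μ := μ) (g := g) hX hw hw0 hlam hδ hmom hs hu hv
        (K := (|Ku| + |Kv|) * s ^ n) (by positivity) huK hvK ih x a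
      rw [← hu', ← hv'] at this
      exact this.trans (le_of_eq (by ring))
  funext x a
  have h3 : Tendsto (fun n : ℕ => (|Ku| + |Kv|) * s ^ n * w x) atTop (𝓝 0) := by
    have := ((tendsto_pow_atTop_nhds_zero_of_lt_one hs0 hs1).const_mul (|Ku| + |Kv|)).mul_const (w x)
    simpa using this
  have h4 := ge_of_tendsto h3 (Eventually.of_forall fun n => key n x a)
  exact sub_eq_zero.1 (abs_nonpos_iff.1 h4)

end Bellman

/-! ### Freezing independent variables and equality in law -/

section Freezing

variable {E G : Type*} [mE : MeasurableSpace E] [mG : MeasurableSpace G]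

lemma lintegral_freeze_aux {Ω : Type*} {mΩ : MeasurableSpace Ω} {μ : Measure Ω}
    [IsProbabilityMeasure μ] {Ω' : Type*} {mΩ' : MeasurableSpace Ω'} {Z : Ω → E} {W : Ω → Ω'}
    (hZ : Measurable Z) (hW : Measurable W)
    (h : Indep (mE.comap Z) (mΩ'.comap W) μ) {f : E × Ω' → ℝ≥0∞}
    (hf : Measurable f) :
    ∫⁻ ω, f (Z ω, W ω) ∂μ = ∫⁻ z, ∫⁻ ω, f (z, W ω) ∂μ ∂(μ.map Z) := by
  have h1 := (indepFun_iff_map_prod_eq_prod_map_map hZ.aemeasurable hW.aemeasurable).1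
    ((IndepFun_iff_Indep _ _ _).2 h)
  have : IsProbabilityMeasure (μ.map W) := Measure.isProbabilityMeasure_map hW.aemeasurable
  rw [← lintegral_map (μ := μ) hf (hZ.prodMk hW), h1, lintegral_prod _ hf.aemeasurable]
  refine lintegral_congr fun z => ?_
  exact lintegral_map (hf.comp measurable_prodMk_left) hW

/-- If `Z` is independent of the randomness in the random field `f`, then `f` evaluated at `Z` can
be integrated by first freezing the value of `Z`. Joint measurability of `f` is what makes the
evaluation at a random point meaningful. -/
lemma lintegral_freeze {Ω : Type*} {m1 m2 mΩ : MeasurableSpace Ω} {μ : Measure Ω}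
    [IsProbabilityMeasure μ] (h1 : m1 ≤ mΩ) (h2 : m2 ≤ mΩ)
    (h : Indep m1 m2 μ) {Z : Ω → E} (hZ : Measurable[m1] Z) {f : E × Ω → ℝ≥0∞}
    (hf : @Measurable _ _ (mE.prod m2) _ f) :
    ∫⁻ ω, f (Z ω, ω) ∂μ = ∫⁻ z, ∫⁻ ω, f (z, ω) ∂μ ∂(μ.map Z) := by
  have hI : Indep (mE.comap Z) (m2.comap id) μ := by
    rw [MeasurableSpace.comap_id]
    exact indep_of_indep_of_le_left h hZ.comap_le
  exact lintegral_freeze_aux (mΩ' := m2) (W := id) (hZ.mono h1 le_rfl)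
    (measurable_id.mono h2 le_rfl) hI hf

lemma measurable_freeze {Ω : Type*} {m1 m2 mΩ : MeasurableSpace Ω} (h1 : m1 ≤ mΩ) (h2 : m2 ≤ mΩ)
    {Z : Ω → E} (hZ : Measurable[m1] Z) {f : E × Ω → G}
    (hf : @Measurable _ _ (mE.prod m2) _ f) : Measurable fun ω => f (Z ω, ω) :=
  (hf.mono (sup_le_sup le_rfl (MeasurableSpace.comap_mono h2)) le_rfl).comp
    ((hZ.mono h1 le_rfl).prodMk measurable_id)

/-- The law of `f (Z, ·)` is determined by the law of `Z` and the laws of the `f (z, ·)`. -/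
lemma identDistrib_freeze {Ω : Type*} {m1 m2 m1' m2' mΩ : MeasurableSpace Ω} {μ : Measure Ω}
    [IsProbabilityMeasure μ] (h1 : m1 ≤ mΩ) (h2 : m2 ≤ mΩ)
    (h1' : m1' ≤ mΩ) (h2' : m2' ≤ mΩ) (h : Indep m1 m2 μ) (h' : Indep m1' m2' μ)
    {Z Z' : Ω → E} (hZ : Measurable[m1] Z) (hZ' : Measurable[m1'] Z') {f f' : E × Ω → G}
    (hf : @Measurable _ _ (mE.prod m2) _ f) (hf' : @Measurable _ _ (mE.prod m2') _ f')
    (hZZ : IdentDistrib Z Z' μ μ)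
    (hff : ∀ z, IdentDistrib (fun ω => f (z, ω)) (fun ω => f' (z, ω)) μ μ) :
    IdentDistrib (fun ω => f (Z ω, ω)) (fun ω => f' (Z' ω, ω)) μ μ := by
  have m : Measurable fun ω => f (Z ω, ω) := measurable_freeze h1 h2 hZ hf
  have m' : Measurable fun ω => f' (Z' ω, ω) := measurable_freeze h1' h2' hZ' hf'
  refine ⟨m.aemeasurable, m'.aemeasurable, ?_⟩
  ext s hs
  have hi : Measurable (s.indicator (1 : G → ℝ≥0∞)) := measurable_one.indicator hs
  have e : ∀ {k : Ω → G}, AEMeasurable k μ →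
      μ.map k s = ∫⁻ ω, s.indicator (1 : G → ℝ≥0∞) (k ω) ∂μ := by
    intro k hk
    rw [← lintegral_map' hi.aemeasurable hk, lintegral_indicator_one hs]
  rw [e m.aemeasurable, e m'.aemeasurable,
    lintegral_freeze (f := fun p => s.indicator (1 : G → ℝ≥0∞) (f p)) h1 h2 h hZ (hi.comp hf),
    lintegral_freeze (f := fun p => s.indicator (1 : G → ℝ≥0∞) (f' p)) h1' h2' h' hZ'
      (hi.comp hf'), hZZ.map_eq]
  refine lintegral_congr fun z => ?_
  rw [← e (hff z).aemeasurable_fst, ← e (hff z).aemeasurable_snd, (hff z).map_eq]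

lemma identDistrib_prodMk {Ω : Type*} {mΩ : MeasurableSpace Ω} {μ : Measure Ω}
    [IsProbabilityMeasure μ] {f f' : Ω → E} {k k' : Ω → G} (hf : IdentDistrib f f' μ μ)
    (hk : IdentDistrib k k' μ μ) (h : IndepFun f k μ) (h' : IndepFun f' k' μ) :
    IdentDistrib (fun ω => (f ω, k ω)) (fun ω => (f' ω, k' ω)) μ μ := by
  refine ⟨hf.aemeasurable_fst.prodMk hk.aemeasurable_fst,
    hf.aemeasurable_snd.prodMk hk.aemeasurable_snd, ?_⟩
  rw [(indepFun_iff_map_prod_eq_prod_map_map hf.aemeasurable_fst hk.aemeasurable_fst).1 h,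
    (indepFun_iff_map_prod_eq_prod_map_map hf.aemeasurable_snd hk.aemeasurable_snd).1 h',
    hf.map_eq, hk.map_eq]

lemma measurable_field {Ω P : Type*} {m : MeasurableSpace Ω} {f : Ω → P → G}
    (h : ∀ p, Measurable fun ω => f ω p) : Measurable f :=
  measurable_pi_iff.2 h

end Freezing

/-! ### Blocks of the noise indexed by the tree of integer lists -/

section Tree

/-- All indices extending `θ`, including `θ` itself. -/
def cone (θ : List ℤ) : Set (List ℤ) := {η | θ <+: η}

/-- All proper extensions of `θ`; the level-`n` iterate with index `θ` only sees this noise. -/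
def desc (θ : List ℤ) : Set (List ℤ) := cone θ \ {θ}

/-- The indices seen by the `i`-th sample of the `l`-th correction term below `θ`. -/
def block (θ : List ℤ) (l i : ℕ) : Set (List ℤ) :=
  cone (θ ++ [(l : ℤ), (i : ℤ) + 1]) ∪ cone (θ ++ [-(l : ℤ), (i : ℤ) + 1])

lemma disjoint_cone {θ η : List ℤ} (hl : θ.length = η.length) (h : θ ≠ η) :
    Disjoint (cone θ) (cone η) := by
  rw [Set.disjoint_left]
  intro ξ h1 h2
  exact h ((List.prefix_of_prefix_length_le h1 h2 hl.le).eq_of_length hl)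

lemma cone_append_subset_desc (θ : List ℤ) (a b : ℤ) : cone (θ ++ [a, b]) ⊆ desc θ := by
  intro η h
  refine ⟨(List.prefix_append θ _).trans h, ?_⟩
  rintro rfl
  have := List.IsPrefix.length_le h
  simp at this

lemma block_subset_desc (θ : List ℤ) (l i : ℕ) : block θ l i ⊆ desc θ :=
  Set.union_subset (cone_append_subset_desc _ _ _) (cone_append_subset_desc _ _ _)

lemma disjoint_block (θ : List ℤ) {l i l' i' : ℕ} (h : l ≠ l' ∨ i ≠ i') :
    Disjoint (block θ l i) (block θ l' i') := by
  have key : ∀ a b : ℤ, (a = l ∨ a = -l) → (b = l' ∨ b = -l') →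
      Disjoint (cone (θ ++ [a, (i : ℤ) + 1])) (cone (θ ++ [b, (i' : ℤ) + 1])) := by
    intro a b ha hb
    refine disjoint_cone (by simp) fun e => ?_
    have e := List.append_cancel_left e
    simp only [List.cons.injEq, and_true] at e
    omega
  simp only [block, Set.disjoint_union_left, Set.disjoint_union_right]
  refine ⟨⟨key _ _ ?_ ?_, key _ _ ?_ ?_⟩, ⟨key _ _ ?_ ?_, key _ _ ?_ ?_⟩⟩ <;> simp

lemma disjoint_cone_neg (θ : List ℤ) {l : ℕ} (hl : l ≠ 0) (i : ℕ) :
    Disjoint (cone (θ ++ [(l : ℤ), (i : ℤ) + 1])) (cone (θ ++ [-(l : ℤ), (i : ℤ) + 1])) := by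
  refine disjoint_cone (by simp) fun e => ?_
  have e := List.append_cancel_left e
  simp only [List.cons.injEq, and_true] at e
  omega

lemma self_mem_cone (θ : List ℤ) : θ ∈ cone θ := List.prefix_refl θ

lemma desc_subset_cone (θ : List ℤ) : desc θ ⊆ cone θ := Set.sdiff_subset

end Tree

/-! ### Measurability and laws of the iterates -/

section Fields

variable {A : Type*} [Fintype A] [Nonempty A]
variable {Ω : Type*} [mΩ : MeasurableSpace Ω] {μ : Measure Ω} [IsProbabilityMeasure μ]
variable {S : Type*} [mS : MeasurableSpace S]

/-- The σ-algebra generated by the noise with indices in `I`. -/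
@[reducible] def sig (F : List ℤ → MeasurableSpace Ω) (I : Set (List ℤ)) : MeasurableSpace Ω :=
  ⨆ η ∈ I, F η

/-- The standing assumptions on the noise: independent σ-algebras `F θ` and jointly measurable
random fields `X θ`, with `X θ` driven by `F θ` and all `X θ` equal in law. -/
structure Noise (μ : Measure Ω) (F : List ℤ → MeasurableSpace Ω)
    (X : List ℤ → S → A → Ω → S) : Prop where
  le : ∀ θ, F θ ≤ mΩ
  indep : iIndep F μ
  meas : ∀ θ a, @Measurable (S × Ω) S (mS.prod (F θ)) mS fun p => X θ p.1 a p.2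
  ident : ∀ θ η, Measure.map (fun ω => fun p : S × A => X θ p.1 p.2 ω) μ
    = Measure.map (fun ω => fun p : S × A => X η p.1 p.2 ω) μ

/-- The `i`-th sample of the `l`-th correction term in the iterate with index `θ`. -/
noncomputable def incr (X : List ℤ → S → A → Ω → S) (Q : ℕ → List ℤ → S → A → Ω → ℝ)
    (θ : List ℤ) (l i : ℕ) (x : S) (a : A) (ω : Ω) : ℝ :=
  (⨆ b : A, Q l (θ ++ [(l : ℤ), (i : ℤ) + 1]) (X (θ ++ [(l : ℤ), (i : ℤ) + 1]) x a ω) b ω)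
    - if l = 0 then 0 else
      ⨆ b : A, Q (l - 1) (θ ++ [-(l : ℤ), (i : ℤ) + 1])
        (X (θ ++ [(l : ℤ), (i : ℤ) + 1]) x a ω) b ω

/-- The multilevel recursion defining the random iterates `Q n θ`. -/
def IsMLFP (M : ℕ) (δ : ℝ) (g : S → A → ℝ) (X : List ℤ → S → A → Ω → S)
    (Q : ℕ → List ℤ → S → A → Ω → ℝ) : Prop :=
  ∀ n θ x a ω, Q n θ x a ω = g x a +
    ∑ l ∈ Finset.range n, (δ * ((M : ℝ) ^ (n - l))⁻¹) *
      ∑ i ∈ Finset.range (M ^ (n - l)), incr X Q θ l i x a ω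

variable {F : List ℤ → MeasurableSpace Ω} {X : List ℤ → S → A → Ω → S}
  {Q : ℕ → List ℤ → S → A → Ω → ℝ} {M : ℕ} {δ : ℝ} {g : S → A → ℝ}

lemma sig_mono {I J : Set (List ℤ)} (h : I ⊆ J) : sig F I ≤ sig F J :=
  biSup_mono h

lemma le_sig {I : Set (List ℤ)} {θ : List ℤ} (h : θ ∈ I) : F θ ≤ sig F I :=
  le_biSup F h

lemma Noise.sig_le (hN : Noise μ F X) (I : Set (List ℤ)) : sig F I ≤ mΩ :=
  iSup₂_le fun θ _ => hN.le θ

lemma Noise.indep_sig (hN : Noise μ F X) {I J : Set (List ℤ)} (h : Disjoint I J) :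
    Indep (sig F I) (sig F J) μ :=
  indep_iSup_of_disjoint hN.le hN.indep h

lemma Noise.indep_single (hN : Noise μ F X) {θ : List ℤ} {J : Set (List ℤ)} (h : θ ∉ J) :
    Indep (F θ) (sig F J) μ :=
  indep_of_indep_of_le_left (hN.indep_sig (I := {θ}) (Set.disjoint_singleton_left.2 h))
    (le_sig rfl)

lemma prod_mono_right {m m' : MeasurableSpace Ω} (h : m ≤ m') : mS.prod m ≤ mS.prod m' :=
  sup_le_sup le_rfl (MeasurableSpace.comap_mono h)

lemma measurable_slice {m : MeasurableSpace Ω} {T : Type*} [MeasurableSpace T] {f : S → Ω → T}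
    (h : @Measurable (S × Ω) T (mS.prod m) _ fun p => f p.1 p.2) (x : S) : Measurable[m] (f x) :=
  @Measurable.comp Ω (S × Ω) T m (mS.prod m) _ _ _ h (@measurable_prodMk_left S Ω mS m x)

lemma Noise.meas_full (hN : Noise μ F X) (θ : List ℤ) (a : A) :
    Measurable fun p : S × Ω => X θ p.1 a p.2 :=
  (hN.meas θ a).mono (prod_mono_right (hN.le θ)) le_rfl

lemma Noise.meas_field (hN : Noise μ F X) (θ : List ℤ) :
    Measurable[F θ] fun ω => fun p : S × A => X θ p.1 p.2 ω :=
  measurable_field (m := F θ) fun p =>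
    measurable_slice (f := fun x => X θ x p.2) (hN.meas θ p.2) p.1

lemma Noise.identDistrib (hN : Noise μ F X) (θ η : List ℤ) :
    IdentDistrib (fun ω => fun p : S × A => X θ p.1 p.2 ω)
      (fun ω => fun p : S × A => X η p.1 p.2 ω) μ μ :=
  ⟨((hN.meas_field θ).mono (hN.le θ) le_rfl).aemeasurable,
    ((hN.meas_field η).mono (hN.le η) le_rfl).aemeasurable, hN.ident θ η⟩

lemma measurable_iSup_comp {Ω : Type*} [MeasurableSpace Ω] {T : Type*} [MeasurableSpace T]
    {X : T → Ω → S} {U : S → A → Ω → ℝ} (hX : Measurable fun p : T × Ω => X p.1 p.2)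
    (hU : ∀ b, Measurable fun p : S × Ω => U p.1 b p.2) :
    Measurable fun p : T × Ω => ⨆ b : A, U (X p.1 p.2) b p.2 :=
  Measurable.iSup fun b => (hU b).comp (hX.prodMk measurable_snd)

/-- The correction terms are measurable with respect to any σ-algebra that contains the noise
they are built from. -/
lemma measurable_diff {Ω : Type*} {m : MeasurableSpace Ω} {T : Type*} [mT : MeasurableSpace T]
    {X : T → Ω → S} {U V : S → A → Ω → ℝ} {l : ℕ}
    (hX : Measurable fun p : T × Ω => X p.1 p.2)
    (hU : ∀ b, Measurable fun p : S × Ω => U p.1 b p.2)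
    (hV : l ≠ 0 → ∀ b, Measurable fun p : S × Ω => V p.1 b p.2) :
    Measurable fun p : T × Ω => (⨆ b : A, U (X p.1 p.2) b p.2)
      - if l = 0 then 0 else ⨆ b : A, V (X p.1 p.2) b p.2 := by
  refine (measurable_iSup_comp hX hU).sub ?_
  by_cases hl : l = 0
  · simp [hl]
  · simpa [hl] using measurable_iSup_comp hX (hV hl)

lemma measurable_incr_of (hN : Noise μ F X) {θ : List ℤ} {l i : ℕ}
    (h1 : ∀ η b, @Measurable (S × Ω) ℝ (mS.prod (sig F (desc η))) _ fun p => Q l η p.1 b p.2)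
    (h2 : l ≠ 0 → ∀ η b, @Measurable (S × Ω) ℝ (mS.prod (sig F (desc η))) _
      fun p => Q (l - 1) η p.1 b p.2) (a : A) :
    @Measurable (S × Ω) ℝ (mS.prod (sig F (block θ l i))) _ fun p => incr X Q θ l i p.1 a p.2 := by
  refine measurable_diff (m := sig F (block θ l i)) (T := S) (X := fun x ω => X _ x a ω)
    (U := Q l _) (V := Q (l - 1) _) ?_ (fun b => ?_) (fun hl b => ?_)
  · exact (hN.meas _ a).mono (prod_mono_right (le_sig (Or.inl (self_mem_cone _)))) le_rfl
  · exact (h1 _ b).mono (prod_mono_right (sig_mono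
      ((desc_subset_cone _).trans Set.subset_union_left))) le_rfl
  · exact (h2 hl _ b).mono (prod_mono_right (sig_mono
      ((desc_subset_cone _).trans Set.subset_union_right))) le_rfl

lemma measurable_Q (hN : Noise μ F X) (hQ : IsMLFP M δ g X Q)
    (hg : ∀ a, Measurable fun x => g x a) (n : ℕ) :
    ∀ θ a, @Measurable (S × Ω) ℝ (mS.prod (sig F (desc θ))) _ fun p => Q n θ p.1 a p.2 := by
  induction n using Nat.strong_induction_on with
  | _ n ih =>
    intro θ a
    simp only [hQ n θ]
    refine Measurable.add ((hg a).comp (@measurable_fst _ _ mS (sig F (desc θ)))) ?_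
    refine Finset.measurable_sum _ fun l hl => ?_
    have hl := Finset.mem_range.1 hl
    refine Measurable.const_mul (Finset.measurable_sum _ fun i _ => ?_) _
    exact (measurable_incr_of hN (ih l hl) (fun _ => ih (l - 1) (by omega)) a).mono
      (prod_mono_right (sig_mono (block_subset_desc θ l i))) le_rfl

lemma measurable_incr (hN : Noise μ F X) (hQ : IsMLFP M δ g X Q)
    (hg : ∀ a, Measurable fun x => g x a) (θ : List ℤ) (l i : ℕ) (a : A) :
    @Measurable (S × Ω) ℝ (mS.prod (sig F (block θ l i))) _ fun p => incr X Q θ l i p.1 a p.2 :=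
  measurable_incr_of hN (measurable_Q hN hQ hg l) (fun _ => measurable_Q hN hQ hg (l - 1)) a

lemma measurable_Q_field (hN : Noise μ F X) (hQ : IsMLFP M δ g X Q)
    (hg : ∀ a, Measurable fun x => g x a) (n : ℕ) (θ : List ℤ) :
    Measurable[sig F (desc θ)] fun ω => fun p : S × A => Q n θ p.1 p.2 ω :=
  measurable_field (m := sig F (desc θ)) fun p =>
    measurable_slice (f := fun x => Q n θ x p.2) (measurable_Q hN hQ hg n θ p.2) p.1

lemma indepFun_of_sig (hN : Noise μ F X) {I J : Set (List ℤ)} (h : Disjoint I J)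
    {E G : Type*} [MeasurableSpace E] [MeasurableSpace G] {f : Ω → E} {k : Ω → G}
    (hf : Measurable[sig F I] f) (hk : Measurable[sig F J] k) : IndepFun f k μ := by
  rw [IndepFun_iff_Indep]
  exact indep_of_indep_of_le_left (indep_of_indep_of_le_right (hN.indep_sig h) hk.comap_le)
    hf.comap_le

/-- Equality in law of the correction terms, as random fields on `S × A`, given equality in law of
the lower-level iterates. -/
lemma identDistrib_incr_of (hN : Noise μ F X) (hQ : IsMLFP M δ g X Q)
    (hg : ∀ a, Measurable fun x => g x a) {l : ℕ}
    (h1 : ∀ θ η, IdentDistrib (fun ω => fun p : S × A => Q l θ p.1 p.2 ω)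
      (fun ω => fun p : S × A => Q l η p.1 p.2 ω) μ μ)
    (h2 : l ≠ 0 → ∀ θ η, IdentDistrib (fun ω => fun p : S × A => Q (l - 1) θ p.1 p.2 ω)
      (fun ω => fun p : S × A => Q (l - 1) η p.1 p.2 ω) μ μ) (θ η : List ℤ) (i : ℕ) :
    IdentDistrib (fun ω => fun p : S × A => incr X Q θ l i p.1 p.2 ω)
      (fun ω => fun p : S × A => incr X Q η l i p.1 p.2 ω) μ μ := by
  let f : List ℤ → (S × A → S) × Ω → (S × A → ℝ) := fun θ q p =>
    (⨆ b : A, Q l (θ ++ [(l : ℤ), (i : ℤ) + 1]) (q.1 p) b q.2)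
    - if l = 0 then 0 else ⨆ b : A, Q (l - 1) (θ ++ [-(l : ℤ), (i : ℤ) + 1]) (q.1 p) b q.2
  let J : List ℤ → Set (List ℤ) := fun θ => block θ l i \ {θ ++ [(l : ℤ), (i : ℤ) + 1]}
  have hf : ∀ θ, @Measurable _ _ (MeasurableSpace.pi.prod (sig F (J θ))) _ (f θ) := by
    intro θ
    refine measurable_field (m := MeasurableSpace.pi.prod (sig F (J θ))) fun p => ?_
    refine measurable_diff (m := sig F (J θ)) (T := S × A → S) (X := fun z _ => z p)
      (U := Q l _) (V := Q (l - 1) _) ?_ (fun b => ?_) (fun hl b => ?_)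
    · exact (measurable_pi_apply p).comp (@measurable_fst _ _ _ (sig F (J θ)))
    · refine (measurable_Q hN hQ hg l _ b).mono (prod_mono_right (sig_mono ?_)) le_rfl
      exact Set.sdiff_subset_sdiff_left Set.subset_union_left
    · refine (measurable_Q hN hQ hg (l - 1) _ b).mono (prod_mono_right (sig_mono ?_)) le_rfl
      refine fun ξ hξ => ⟨Or.inr hξ.1, ?_⟩
      rintro rfl
      exact Set.disjoint_left.1 (disjoint_cone_neg θ hl i) (self_mem_cone _) hξ.1
  have hφ : ∀ z : S × A → S, Measurable fun (h : S × A → ℝ) (p : S × A) => ⨆ b, h (z p, b) :=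
    fun z => measurable_pi_iff.2 fun p => Measurable.iSup fun b => measurable_pi_apply _
  refine identDistrib_freeze (f := f θ) (f' := f η) (hN.le _) (hN.sig_le (J θ)) (hN.le _)
    (hN.sig_le (J η)) (hN.indep_single ?_) (hN.indep_single ?_) (hN.meas_field _)
    (hN.meas_field _) (hf θ) (hf η) (hN.identDistrib _ _) fun z => ?_
  · exact fun h => h.2 rfl
  · exact fun h => h.2 rfl
  · by_cases hl : l = 0
    · simp only [f, hl, if_true, sub_zero]
      subst hl
      exact (h1 _ _).comp (hφ z)
    · simp only [f, hl, if_false]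
      have hp := identDistrib_prodMk (h1 (θ ++ [(l : ℤ), (i : ℤ) + 1]) (η ++ [(l : ℤ), (i : ℤ) + 1]))
        (h2 hl (θ ++ [-(l : ℤ), (i : ℤ) + 1]) (η ++ [-(l : ℤ), (i : ℤ) + 1]))
        (indepFun_of_sig hN ((disjoint_cone_neg θ hl i).mono (desc_subset_cone _)
          (desc_subset_cone _)) (measurable_Q_field hN hQ hg _ _) (measurable_Q_field hN hQ hg _ _))
        (indepFun_of_sig hN ((disjoint_cone_neg η hl i).mono (desc_subset_cone _)
          (desc_subset_cone _)) (measurable_Q_field hN hQ hg _ _) (measurable_Q_field hN hQ hg _ _))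
      refine hp.comp (u := fun k : (S × A → ℝ) × (S × A → ℝ) => fun p : S × A =>
        (⨆ b, k.1 (z p, b)) - ⨆ b, k.2 (z p, b)) ?_
      refine measurable_pi_iff.2 fun p => ?_
      exact (((measurable_pi_apply p).comp (hφ z)).comp measurable_fst).sub
        (((measurable_pi_apply p).comp (hφ z)).comp measurable_snd)

lemma identDistrib_sum (hN : Noise μ F X) {ι P : Type*} {Y Y' : ι → Ω → P → ℝ}
    {B B' : ι → Set (List ℤ)} (hB : Pairwise fun t u => Disjoint (B t) (B u))
    (hB' : Pairwise fun t u => Disjoint (B' t) (B' u))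
    (hY : ∀ t, Measurable[sig F (B t)] (Y t)) (hY' : ∀ t, Measurable[sig F (B' t)] (Y' t))
    (T : Finset ι) (h : ∀ t ∈ T, IdentDistrib (Y t) (Y' t) μ μ) :
    IdentDistrib (fun ω => fun p => ∑ t ∈ T, Y t ω p) (fun ω => fun p => ∑ t ∈ T, Y' t ω p)
      μ μ := by
  classical
  induction T using Finset.induction_on with
  | empty =>
    simpa using IdentDistrib.refl (μ := μ) (f := fun _ : Ω => fun _ : P => (0 : ℝ))
      measurable_const.aemeasurable
  | insert t T ht ih =>
    have hsum : ∀ {Y : ι → Ω → P → ℝ} {B : ι → Set (List ℤ)},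
        (∀ t, Measurable[sig F (B t)] (Y t)) →
        Measurable[sig F (⋃ t ∈ T, B t)] fun ω => fun p => ∑ t ∈ T, Y t ω p := by
      intro Y B hY
      refine measurable_field (m := sig F (⋃ t ∈ T, B t)) fun p => Finset.measurable_sum _ fun u hu => ?_
      exact ((measurable_pi_apply p).comp (hY u)).mono
        (sig_mono (Set.subset_biUnion_of_mem (u := fun t => B t) hu)) le_rfl
    have hdis : ∀ {B : ι → Set (List ℤ)}, (Pairwise fun t u => Disjoint (B t) (B u)) →
        Disjoint (B t) (⋃ t ∈ T, B t) := by
      intro B hB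
      simp only [Set.disjoint_iUnion_right]
      exact fun u hu => hB fun e => ht (e ▸ hu)
    have hp := identDistrib_prodMk (h t (Finset.mem_insert_self _ _))
      (ih fun u hu => h u (Finset.mem_insert_of_mem hu))
      (indepFun_of_sig hN (hdis hB) (hY t) (hsum hY))
      (indepFun_of_sig hN (hdis hB') (hY' t) (hsum hY'))
    simp only [Finset.sum_insert ht]
    refine hp.comp (u := fun k : (P → ℝ) × (P → ℝ) => fun p => k.1 p + k.2 p) ?_
    exact measurable_pi_iff.2 fun p => ((measurable_pi_apply p).comp measurable_fst).add
      ((measurable_pi_apply p).comp measurable_snd)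

/-- The law of the random field `Q n θ` does not depend on `θ`. -/
lemma identDistrib_Q (hN : Noise μ F X) (hQ : IsMLFP M δ g X Q)
    (hg : ∀ a, Measurable fun x => g x a) (n : ℕ) :
    ∀ θ η, IdentDistrib (fun ω => fun p : S × A => Q n θ p.1 p.2 ω)
      (fun ω => fun p : S × A => Q n η p.1 p.2 ω) μ μ := by
  induction n using Nat.strong_induction_on with
  | _ n ih =>
    intro θ η
    let T : Finset (Σ _ : ℕ, ℕ) := (Finset.range n).sigma fun l => Finset.range (M ^ (n - l))
    let Y : List ℤ → (Σ _ : ℕ, ℕ) → Ω → S × A → ℝ := fun θ t ω p =>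
      (δ * ((M : ℝ) ^ (n - t.1))⁻¹) * incr X Q θ t.1 t.2 p.1 p.2 ω
    have hdis : ∀ θ, Pairwise fun t u : (Σ _ : ℕ, ℕ) =>
        Disjoint (block θ t.1 t.2) (block θ u.1 u.2) := by
      rintro θ ⟨l, i⟩ ⟨l', i'⟩ h
      refine disjoint_block θ ?_
      by_contra! hc
      exact h (by simpa using hc)
    have hY : ∀ θ t, Measurable[sig F (block θ t.1 t.2)] (Y θ t) := fun θ t =>
      measurable_field (m := sig F (block θ t.1 t.2)) fun p =>
        (measurable_slice (f := fun x => incr X Q θ t.1 t.2 x p.2) (measurable_incr hN hQ hg θ t.1 t.2 p.2) p.1).const_mul _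
    have hs := identDistrib_sum hN (hdis θ) (hdis η) (hY θ) (hY η) T (by
      rintro ⟨l, i⟩ ht
      have hl : l < n := Finset.mem_range.1 (Finset.mem_sigma.1 ht).1
      refine (identDistrib_incr_of hN hQ hg (ih l hl) (fun _ => ih (l - 1) (by omega)) θ η i).comp
        (u := fun k : S × A → ℝ => fun p => (δ * ((M : ℝ) ^ (n - l))⁻¹) * k p) ?_
      exact measurable_pi_iff.2 fun p => (measurable_pi_apply p).const_mul _)
    have e : ∀ θ, (fun ω => fun p : S × A => Q n θ p.1 p.2 ω) =
        fun ω => fun p => g p.1 p.2 + ∑ t ∈ T, Y θ t ω p := by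
      intro θ
      funext ω p
      rw [hQ n θ, Finset.sum_sigma]
      simp only [Y, Finset.mul_sum]
    rw [e θ, e η]
    refine hs.comp (u := fun k : S × A → ℝ => fun p => g p.1 p.2 + k p) ?_
    exact measurable_pi_iff.2 fun p => (measurable_pi_apply p).const_add _

lemma identDistrib_iSup_comp (hN : Noise μ F X) (hQ : IsMLFP M δ g X Q)
    (hg : ∀ a, Measurable fun x => g x a) (n : ℕ) {θ η θ' η' : List ℤ} (h : η ∉ desc θ)
    (h' : η' ∉ desc θ') (x : S) (a : A) :
    IdentDistrib (fun ω => ⨆ b : A, Q n θ (X η x a ω) b ω)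
      (fun ω => ⨆ b : A, Q n θ' (X η' x a ω) b ω) μ μ := by
  have hf : ∀ θ, @Measurable (S × Ω) ℝ (mS.prod (sig F (desc θ))) _
      fun p => ⨆ b : A, Q n θ p.1 b p.2 := fun θ =>
    Measurable.iSup fun b => measurable_Q hN hQ hg n θ b
  refine identDistrib_freeze (f := fun p => ⨆ b : A, Q n θ p.1 b p.2)
    (f' := fun p => ⨆ b : A, Q n θ' p.1 b p.2) (hN.le η) (hN.sig_le _) (hN.le η') (hN.sig_le _)
    (hN.indep_single h) (hN.indep_single h') (measurable_slice (f := fun x => X η x a) (hN.meas η a) x)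
    (measurable_slice (f := fun x => X η' x a) (hN.meas η' a) x) (hf θ) (hf θ')
    ((hN.identDistrib η η').comp (measurable_pi_apply (x, a))) fun z => ?_
  exact (identDistrib_Q hN hQ hg n θ θ').comp (u := fun k : S × A → ℝ => ⨆ b, k (z, b))
    (Measurable.iSup fun b => measurable_pi_apply _)

end Fields

/-! ### Sums in `L²` -/

section LTwo

variable {Ω : Type*} [mΩ : MeasurableSpace Ω] {μ : Measure Ω}

lemma eLpNorm_two_sum_le {ι : Type*} (T : Finset ι) {f : ι → Ω → ℝ} {c : ι → ℝ}
    (hf : ∀ t ∈ T, AEStronglyMeasurable (f t) μ) (hc : ∀ t ∈ T, 0 ≤ c t)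
    (h : ∀ t ∈ T, eLpNorm (f t) 2 μ ≤ ENNReal.ofReal (c t)) :
    eLpNorm (fun ω => ∑ t ∈ T, f t ω) 2 μ ≤ ENNReal.ofReal (∑ t ∈ T, c t) := by
  rw [ENNReal.ofReal_sum_of_nonneg hc]
  have e : (fun ω => ∑ t ∈ T, f t ω) = ∑ t ∈ T, f t := by ext ω; simp
  rw [e]
  exact (eLpNorm_sum_le hf (by norm_num)).trans (Finset.sum_le_sum h)

lemma eLpNorm_two_add_le {f k : Ω → ℝ} {c c' : ℝ} (hf : AEStronglyMeasurable f μ)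
    (hk : AEStronglyMeasurable k μ) (hc : 0 ≤ c) (hc' : 0 ≤ c')
    (h : eLpNorm f 2 μ ≤ ENNReal.ofReal c) (h' : eLpNorm k 2 μ ≤ ENNReal.ofReal c') :
    eLpNorm (fun ω => f ω + k ω) 2 μ ≤ ENNReal.ofReal (c + c') := by
  rw [ENNReal.ofReal_add hc hc']
  exact (eLpNorm_add_le hf hk (by norm_num)).trans (add_le_add h h')

lemma eLpNorm_two_sub_le {f k : Ω → ℝ} {c c' : ℝ} (hf : AEStronglyMeasurable f μ)
    (hk : AEStronglyMeasurable k μ) (hc : 0 ≤ c) (hc' : 0 ≤ c')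
    (h : eLpNorm f 2 μ ≤ ENNReal.ofReal c) (h' : eLpNorm k 2 μ ≤ ENNReal.ofReal c') :
    eLpNorm (fun ω => f ω - k ω) 2 μ ≤ ENNReal.ofReal (c + c') := by
  rw [ENNReal.ofReal_add hc hc']
  exact (eLpNorm_sub_le hf hk (by norm_num)).trans (add_le_add h h')

lemma eLpNorm_two_const_mul_le {f : Ω → ℝ} {c d : ℝ} (hd : 0 ≤ d)
    (h : eLpNorm f 2 μ ≤ ENNReal.ofReal c) :
    eLpNorm (fun ω => d * f ω) 2 μ ≤ ENNReal.ofReal (d * c) := by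
  have := eLpNorm_const_smul_le (c := d) (f := f) (p := 2) (μ := μ)
  rw [ENNReal.ofReal_mul hd]
  refine this.trans ?_
  rw [Real.enorm_eq_ofReal hd]
  gcongr

variable [IsProbabilityMeasure μ]

/-- Pairwise independent summands: the centred sum of `N` terms has `L²` norm at most `√N` times
the bound for a single term. -/
lemma eLpNorm_two_sum_centered_le {Y : ℕ → Ω → ℝ} {N : ℕ} {B m : ℝ} (hB : 0 ≤ B)
    (hY : ∀ i, AEStronglyMeasurable (Y i) μ)
    (hYB : ∀ i, eLpNorm (Y i) 2 μ ≤ ENNReal.ofReal B) (hm : ∀ i, ∫ ω, Y i ω ∂μ = m)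
    (hI : Pairwise fun i j => IndepFun (Y i) (Y j) μ) :
    eLpNorm (fun ω => ∑ i ∈ Finset.range N, (Y i ω - m)) 2 μ
      ≤ ENNReal.ofReal (√N * B) := by
  have hL : ∀ i, MemLp (Y i) 2 μ := fun i => ⟨hY i, (hYB i).trans_lt ENNReal.ofReal_lt_top⟩
  have hv : ∀ i, variance (Y i) μ ≤ B ^ 2 := by
    intro i
    refine (variance_le_expectation_sq (hY i)).trans ?_
    have h1 := (eLpNorm_two_le_iff hB).1 (hYB i)
    have h2 := (hL i).integrable_sq
    rw [← ofReal_integral_eq_lintegral_ofReal h2 (Eventually.of_forall fun ω => sq_nonneg _),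
      ENNReal.ofReal_le_ofReal_iff (sq_nonneg B)] at h1
    exact h1
  have hS : MemLp (∑ i ∈ Finset.range N, Y i) 2 μ := memLp_finsetSum' _ fun i _ => hL i
  rw [eLpNorm_two_le_iff (by positivity)]
  have e : ∀ ω, ∑ i ∈ Finset.range N, (Y i ω - m) =
      (∑ i ∈ Finset.range N, Y i) ω - ∫ ω', (∑ i ∈ Finset.range N, Y i) ω' ∂μ := by
    intro ω
    simp only [Finset.sum_apply]
    rw [integral_finsetSum _ fun i _ => (hL i).integrable (by norm_num)]
    simp [hm]
  simp only [e]
  rw [← evariance_eq_lintegral_ofReal, ← hS.ofReal_variance_eq]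
  refine ENNReal.ofReal_le_ofReal ?_
  rw [IndepFun.variance_sum (fun i _ => hL i) (fun i _ j _ h => hI h)]
  refine (Finset.sum_le_sum fun i _ => hv i).trans ?_
  rw [mul_pow, Real.sq_sqrt (by positivity)]
  simp

end LTwo

/-! ### The error recursion -/

section Error

variable {A : Type*} [Fintype A] [Nonempty A]
variable {Ω : Type*} [mΩ : MeasurableSpace Ω] {μ : Measure Ω} [IsProbabilityMeasure μ]
variable {S : Type*} [mS : MeasurableSpace S]

/-- The data of a single Markov decision problem together with its Bellman solution `q`. -/
structure Problem (μ : Measure Ω) (F : List ℤ → MeasurableSpace Ω) (X : List ℤ → S → A → Ω → S)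
    (Q : ℕ → List ℤ → S → A → Ω → ℝ) (M : ℕ) (δ lam s κ Kq : ℝ) (w : S → ℝ)
    (g q : S → A → ℝ) : Prop where
  noise : Noise μ F X
  mlfp : IsMLFP M δ g X Q
  g_meas : ∀ a, Measurable fun x => g x a
  w_meas : Measurable w
  w_pos : ∀ x, 0 < w x
  lam_nonneg : 0 ≤ lam
  δ_nonneg : 0 ≤ δ
  mom : ∀ x a, (∫⁻ ω, ENNReal.ofReal (w (X [0] x a ω) ^ 2) ∂μ)
    ≤ ENNReal.ofReal ((lam * w x) ^ 2)
  le_s : lam * δ ≤ s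
  M_pos : 0 < M
  κ_nonneg : 0 ≤ κ
  g_le : ∀ x a, |g x a| ≤ κ * w x
  q_meas : ∀ a, Measurable fun x => q x a
  q_le : ∀ x a, |q x a| ≤ Kq * w x
  q_fix : ∀ x a, q x a = bellman μ (X [0]) δ g q x a

variable {F : List ℤ → MeasurableSpace Ω} {X : List ℤ → S → A → Ω → S}
  {Q : ℕ → List ℤ → S → A → Ω → ℝ} {M : ℕ} {δ lam s κ Kq : ℝ} {w : S → ℝ} {g q : S → A → ℝ}

/-- The level-`n` iterates, for every index `θ`, have weighted `L²` error at most `e`. -/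
def ErrLe (μ : Measure Ω) (Q : ℕ → List ℤ → S → A → Ω → ℝ) (w : S → ℝ) (q : S → A → ℝ)
    (n : ℕ) (e : ℝ) : Prop :=
  ∀ θ x, eLpNorm (fun ω => ⨆ a, |q x a - Q n θ x a ω|) 2 μ ≤ ENNReal.ofReal (e * w x)

lemma measurable_err {Ω : Type*} {m : MeasurableSpace Ω} {q : S → A → ℝ} {U : S → A → Ω → ℝ}
    (hq : ∀ b, Measurable fun x => q x b) (hU : ∀ b, Measurable fun p : S × Ω => U p.1 b p.2) :
    Measurable fun p : S × Ω => ⨆ b, |q p.1 b - U p.1 b p.2| :=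
  Measurable.iSup fun b => (((hq b).comp measurable_fst).sub (hU b)).abs

namespace Problem

variable (P : Problem μ F X Q M δ lam s κ Kq w g q)
include P

/-- The moment bound at index `[0]` transfers to every index by equality in law. -/
lemma mom_all (θ : List ℤ) (x : S) (a : A) :
    (∫⁻ ω, ENNReal.ofReal (w (X θ x a ω) ^ 2) ∂μ) ≤ ENNReal.ofReal ((lam * w x) ^ 2) := by
  have h := ((P.noise.identDistrib θ [0]).comp (measurable_pi_apply (x, a))).comp
    (u := fun y => ENNReal.ofReal (w y ^ 2)) (P.w_meas.pow_const 2).ennreal_ofReal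
  exact h.lintegral_eq.trans_le (P.mom x a)

lemma measurable_X (θ : List ℤ) (x : S) (a : A) : Measurable (X θ x a) :=
  (P.noise.meas_full θ a).comp measurable_prodMk_left

/-- Evaluating a random field at an independent `X η x a` costs a factor `lam` in weighted
`L²` norms. -/
lemma eLpNorm_freeze {I : Set (List ℤ)} {η : List ℤ} (h : η ∉ I) {V : S → Ω → ℝ}
    (hV : @Measurable (S × Ω) ℝ (mS.prod (sig F I)) _ fun p => V p.1 p.2) {c : ℝ} (hc : 0 ≤ c)
    (hVc : ∀ y, eLpNorm (V y) 2 μ ≤ ENNReal.ofReal (c * w y)) (x : S) (a : A) :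
    eLpNorm (fun ω => V (X η x a ω) ω) 2 μ ≤ ENNReal.ofReal (c * (lam * w x)) := by
  have hw := fun y => (P.w_pos y).le
  rw [eLpNorm_two_le_iff (mul_nonneg hc (mul_nonneg P.lam_nonneg (hw x)))]
  rw [lintegral_freeze (f := fun p => ENNReal.ofReal (V p.1 p.2 ^ 2)) (P.noise.le η)
    (P.noise.sig_le I) (P.noise.indep_single h)
    (measurable_slice (f := fun x => X η x a) (P.noise.meas η a) x)
    (hV.pow_const 2).ennreal_ofReal]
  calc _ ≤ ∫⁻ y, ENNReal.ofReal (c ^ 2) * ENNReal.ofReal (w y ^ 2) ∂(μ.map (X η x a)) := by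
        refine lintegral_mono fun y => ?_
        rw [← ENNReal.ofReal_mul (sq_nonneg c), ← mul_pow]
        exact (eLpNorm_two_le_iff (mul_nonneg hc (hw y))).1 (hVc y)
    _ = ENNReal.ofReal (c ^ 2) * ∫⁻ ω, ENNReal.ofReal (w (X η x a ω) ^ 2) ∂μ := by
        rw [lintegral_const_mul _ (P.w_meas.pow_const 2).ennreal_ofReal,
          lintegral_map (P.w_meas.pow_const 2).ennreal_ofReal (P.measurable_X η x a)]
    _ ≤ ENNReal.ofReal (c ^ 2) * ENNReal.ofReal ((lam * w x) ^ 2) := by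
        gcongr; exact P.mom_all η x a
    _ = _ := by rw [← ENNReal.ofReal_mul (sq_nonneg c), ← mul_pow]

lemma measurable_Q_comp (n : ℕ) (θ η : List ℤ) (x : S) (a : A) :
    Measurable fun ω => ⨆ b, Q n θ (X η x a ω) b ω :=
  Measurable.iSup fun b => ((measurable_Q P.noise P.mlfp P.g_meas n θ b).mono
    (prod_mono_right (P.noise.sig_le _)) le_rfl).comp
      ((P.measurable_X η x a).prodMk measurable_id)

lemma measurable_q_comp (η : List ℤ) (x : S) (a : A) :
    Measurable fun ω => ⨆ b, q (X η x a ω) b :=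
  Measurable.iSup fun b => (P.q_meas b).comp (P.measurable_X η x a)

lemma integrable_q_comp (η : List ℤ) (x : S) (a : A) :
    Integrable (fun ω => ⨆ b, q (X η x a ω) b) μ :=
  integrable_iSup_comp (P.noise.meas_full η) (fun x a => (integrable_weight (P.noise.meas_full η)
    P.w_meas P.w_pos P.lam_nonneg (P.mom_all η) x a).1) P.q_meas P.q_le x a

lemma measurable_level (n : ℕ) (θ η : List ℤ) (x : S) (a : A) :
    Measurable fun ω => (⨆ b, Q n θ (X η x a ω) b ω) - ⨆ b, q (X η x a ω) b :=
  (P.measurable_Q_comp n θ η x a).sub (P.measurable_q_comp η x a)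

/-- Freezing `X η x a`: at a next state independent of the iterate, the error of the maximum is at
most `lam` times the error of the iterate. -/
lemma level_bound {n : ℕ} {e : ℝ} (he : 0 ≤ e) (h : ErrLe μ Q w q n e) {θ η : List ℤ}
    (hη : η ∉ desc θ) (x : S) (a : A) :
    eLpNorm (fun ω => (⨆ b, Q n θ (X η x a ω) b ω) - ⨆ b, q (X η x a ω) b) 2 μ
      ≤ ENNReal.ofReal (e * (lam * w x)) := by
  have hV := measurable_err (m := sig F (desc θ)) P.q_meas
    (measurable_Q P.noise P.mlfp P.g_meas n θ)
  refine le_trans (eLpNorm_mono_real fun ω => ?_)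
    (P.eLpNorm_freeze hη (V := fun y ω => ⨆ b, |q y b - Q n θ y b ω|) hV he (h θ) x a)
  rw [Real.norm_eq_abs, abs_sub_comm]
  exact abs_iSup_sub_iSup_le fun b =>
    le_iSup_abs (fun b => q (X η x a ω) b - Q n θ (X η x a ω) b ω) b

lemma integrable_Q_comp {n : ℕ} {e : ℝ} (he : 0 ≤ e) (h : ErrLe μ Q w q n e) {θ η : List ℤ}
    (hη : η ∉ desc θ) (x : S) (a : A) :
    Integrable (fun ω => ⨆ b, Q n θ (X η x a ω) b ω) μ := by
  have h1 : MemLp (fun ω => (⨆ b, Q n θ (X η x a ω) b ω) - ⨆ b, q (X η x a ω) b) 2 μ :=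
    ⟨(P.measurable_level n θ η x a).aestronglyMeasurable,
      (P.level_bound he h hη x a).trans_lt ENNReal.ofReal_lt_top⟩
  exact ((h1.integrable (by norm_num)).add (P.integrable_q_comp η x a)).congr
    (Eventually.of_forall fun ω => by simp)

omit P [Fintype A] [Nonempty A] [IsProbabilityMeasure μ] mΩ mS in
lemma self_notMem_desc (θ : List ℤ) : θ ∉ desc θ := fun h => h.2 rfl

omit P [Fintype A] [Nonempty A] [IsProbabilityMeasure μ] mΩ mS in
lemma notMem_desc_neg (θ : List ℤ) {l : ℕ} (hl : l ≠ 0) (i : ℕ) :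
    θ ++ [(l : ℤ), (i : ℤ) + 1] ∉ desc (θ ++ [-(l : ℤ), (i : ℤ) + 1]) := fun h =>
  Set.disjoint_left.1 (disjoint_cone_neg θ hl i) (self_mem_cone _) (desc_subset_cone _ h)

lemma Q_zero (θ : List ℤ) (x : S) (a : A) (ω : Ω) : Q 0 θ x a ω = g x a := by
  simp [P.mlfp 0 θ x a ω]

lemma incr_measurable (θ : List ℤ) (l i : ℕ) (x : S) (a : A) :
    Measurable[sig F (block θ l i)] (incr X Q θ l i x a) :=
  measurable_slice (f := fun x => incr X Q θ l i x a)
    (measurable_incr P.noise P.mlfp P.g_meas θ l i a) x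

/-- A correction term is a difference of two approximation errors, hence as small as those; the
term with `l = 0` is controlled by the reward bound `κ ≤ K`. -/
lemma incr_bound {K r : ℝ} (hK : κ ≤ K) (hr : 0 < r) {l : ℕ}
    (h1 : l ≠ 0 → ErrLe μ Q w q l (K * r ^ l))
    (h2 : l ≠ 0 → ErrLe μ Q w q (l - 1) (K * r ^ (l - 1))) (θ : List ℤ) (i : ℕ) (x : S) (a : A) :
    eLpNorm (incr X Q θ l i x a) 2 μ
      ≤ ENNReal.ofReal (K * (1 + r⁻¹) * r ^ l * (lam * w x)) := by
  have hK0 : 0 ≤ K := P.κ_nonneg.trans hK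
  have hw0 : 0 ≤ lam * w x := mul_nonneg P.lam_nonneg (P.w_pos x).le
  by_cases hl : l = 0
  · subst hl
    have h3 := eLpNorm_two_const_mul_le P.κ_nonneg
      ((eLpNorm_two_le_iff hw0).2 (P.mom_all (θ ++ [((0 : ℕ) : ℤ), (i : ℤ) + 1]) x a))
    refine ((eLpNorm_mono_real fun ω => ?_).trans h3).trans (ENNReal.ofReal_le_ofReal ?_)
    · rw [Real.norm_eq_abs]
      simp only [incr, if_true, sub_zero, P.Q_zero]
      exact abs_iSup_le fun b => P.g_le _ b
    · have : 0 < r⁻¹ := inv_pos.2 hr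
      rw [pow_zero, mul_one]
      refine mul_le_mul_of_nonneg_right ?_ hw0
      nlinarith
  · set η := θ ++ [(l : ℤ), (i : ℤ) + 1] with hη
    have a1 := P.level_bound (by positivity) (h1 hl) (self_notMem_desc η) x a
    have a2 := P.level_bound (by positivity) (h2 hl) (notMem_desc_neg θ hl i) x a
    have m1 := (P.measurable_level l η η x a).aestronglyMeasurable (μ := μ)
    have m2 := (P.measurable_level (l - 1) (θ ++ [-(l : ℤ), (i : ℤ) + 1]) η x a).aestronglyMeasurable
      (μ := μ)
    have h3 := eLpNorm_two_sub_le m1 m2 (by positivity) (by positivity) a1 a2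
    refine le_trans (le_of_eq ?_) (h3.trans (ENNReal.ofReal_le_ofReal (le_of_eq ?_)))
    · congr 1
      funext ω
      simp only [incr, if_neg hl, hη]
      ring
    · obtain ⟨k, rfl⟩ := Nat.exists_eq_succ_of_ne_zero hl
      simp only [Nat.succ_eq_add_one, Nat.add_sub_cancel, pow_succ]
      field_simp

/-- The mean of a correction term is a difference of two level means that do not depend on `θ` or
`i`; this is what makes the means telescope. -/
lemma incr_mean {e : ℕ → ℝ} {l : ℕ} (he : ∀ n, 0 ≤ e n) (h1 : ErrLe μ Q w q l (e l))
    (h2 : l ≠ 0 → ErrLe μ Q w q (l - 1) (e (l - 1))) (θ : List ℤ) (i : ℕ) (x : S) (a : A) :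
    ∫ ω, incr X Q θ l i x a ω ∂μ = (∫ ω, ⨆ b, Q l [0] (X [0] x a ω) b ω ∂μ) -
      if l = 0 then 0 else ∫ ω, ⨆ b, Q (l - 1) [0] (X [0] x a ω) b ω ∂μ := by
  have e1 := (identDistrib_iSup_comp P.noise P.mlfp P.g_meas l
    (self_notMem_desc (θ ++ [(l : ℤ), (i : ℤ) + 1])) (self_notMem_desc [0]) x a).integral_eq
  have i1 := P.integrable_Q_comp (he l) h1 (self_notMem_desc (θ ++ [(l : ℤ), (i : ℤ) + 1])) x a
  by_cases hl : l = 0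
  · simp only [incr, if_pos hl, sub_zero]
    exact e1
  · have e2 := (identDistrib_iSup_comp P.noise P.mlfp P.g_meas (l - 1)
      (notMem_desc_neg θ hl i) (self_notMem_desc [0]) x a).integral_eq
    have i2 := P.integrable_Q_comp (he _) (h2 hl) (notMem_desc_neg θ hl i) x a
    simp only [incr, if_neg hl]
    rw [integral_sub i1 i2, e1, e2]

omit P [Fintype A] [Nonempty A] [IsProbabilityMeasure μ] mΩ mS in
lemma geom_conv_le {m r : ℝ} (hm : 0 ≤ m) (hr : m < r) (n : ℕ) :
    (∑ l ∈ Finset.range n, m ^ (n - l) * r ^ l) ≤ r ^ n * m / (r - m) := by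
  have hd : 0 < r - m := sub_pos.2 hr
  rw [le_div_iff₀ hd]
  induction n with
  | zero => simpa using hm
  | succ n ih =>
    have e : ∑ l ∈ Finset.range n, m ^ (n + 1 - l) * r ^ l
        = m * ∑ l ∈ Finset.range n, m ^ (n - l) * r ^ l := by
      rw [Finset.mul_sum]
      refine Finset.sum_congr rfl fun l hl => ?_
      rw [Nat.succ_sub (Finset.mem_range.1 hl).le, pow_succ]
      ring
    rw [Finset.sum_range_succ, e, Nat.add_sub_cancel_left, pow_one]
    have := mul_le_mul_of_nonneg_left ih hm
    rw [pow_succ]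
    nlinarith

/-- The error decays geometrically with any rate `r` that satisfies the displayed balance between
the bias contribution `s` and the summed fluctuation contributions. -/
lemma err_le {K r m : ℝ} (hm : m = (√M)⁻¹) (hmr : m < r) (hκK : κ ≤ K) (hqK : κ + Kq ≤ K)
    (hbal : s * (r - m) + Fintype.card A * s * (r + 1) * m ≤ r * (r - m)) (n : ℕ) :
    ErrLe μ Q w q n (K * r ^ n) := by
  have hm0 : 0 < m := by
    rw [hm]; have := P.M_pos; positivity
  have hr0 : 0 < r := hm0.trans hmr
  have hK0 : 0 ≤ K := P.κ_nonneg.trans hκK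
  have hs0 : 0 ≤ s := (mul_nonneg P.lam_nonneg P.δ_nonneg).trans P.le_s
  have hd : 0 < r - m := sub_pos.2 hmr
  have hδ := P.δ_nonneg
  induction n using Nat.strong_induction_on with
  | _ n ih =>
    intro θ x
    have hwx := (P.w_pos x).le
    have hlw : 0 ≤ lam * w x := mul_nonneg P.lam_nonneg hwx
    rcases n with _ | k
    · have hb : ∀ ω, ‖⨆ a, |q x a - Q 0 θ x a ω|‖ ≤ K * w x := fun ω => by
        rw [Real.norm_eq_abs]
        refine abs_iSup_le fun a => ?_
        rw [abs_abs, P.Q_zero]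
        have h1 := abs_sub (q x a) (g x a)
        have h2 := P.q_le x a
        have h3 := P.g_le x a
        have h4 := mul_le_mul_of_nonneg_right hqK hwx
        linarith
      refine (eLpNorm_mono_real (g := fun _ => K * w x) hb).trans ?_
      rw [eLpNorm_two_le_iff (by positivity)]
      simp
    · let D : ℕ → A → ℝ := fun l a => ∫ ω, ⨆ b, Q l [0] (X [0] x a ω) b ω ∂μ
      let mean : ℕ → A → ℝ := fun l a => D l a - if l = 0 then 0 else D (l - 1) a
      let Z : ℕ → A → Ω → ℝ := fun l a ω =>
        ∑ i ∈ Finset.range (M ^ (k + 1 - l)), (incr X Q θ l i x a ω - mean l a)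
      let fluct : A → Ω → ℝ := fun a ω =>
        ∑ l ∈ Finset.range (k + 1), (δ * ((M : ℝ) ^ (k + 1 - l))⁻¹) * Z l a ω
      let bias : A → ℝ := fun a => δ * (D k a - ∫ ω, ⨆ b, q (X [0] x a ω) b ∂μ)
      have hMk : ∀ j : ℕ, (0 : ℝ) < (M : ℝ) ^ j := fun j => by
        have := P.M_pos; positivity
      -- The level means telescope to `D k`, so the deterministic part of the error only involves
      -- the previous level, while `fluct` collects centred sums.
      have hdecomp : ∀ a ω, Q (k + 1) θ x a ω - q x a = fluct a ω + bias a := by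
        intro a ω
        have e1 : ∀ l, (δ * ((M : ℝ) ^ (k + 1 - l))⁻¹) * Z l a ω =
            (δ * ((M : ℝ) ^ (k + 1 - l))⁻¹) *
              ∑ i ∈ Finset.range (M ^ (k + 1 - l)), incr X Q θ l i x a ω - δ * mean l a := by
          intro l
          have := (hMk (k + 1 - l)).ne'
          simp only [Z, Finset.sum_sub_distrib, Finset.sum_const, Finset.card_range,
            nsmul_eq_mul, Nat.cast_pow]
          field_simp
        have e2 : ∀ j, ∑ l ∈ Finset.range (j + 1), mean l a = D j a := by
          intro j
          induction j with
          | zero => simp [mean]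
          | succ j ihj => rw [Finset.sum_range_succ, ihj]; simp [mean]
        have e3 : fluct a ω = (∑ l ∈ Finset.range (k + 1), (δ * ((M : ℝ) ^ (k + 1 - l))⁻¹) *
              ∑ i ∈ Finset.range (M ^ (k + 1 - l)), incr X Q θ l i x a ω) - δ * D k a := by
          simp only [fluct, e1, Finset.sum_sub_distrib, ← Finset.mul_sum, e2]
        rw [e3, P.mlfp (k + 1) θ x a ω, P.q_fix x a]
        simp only [bellman, bias]
        ring
      have hZm : ∀ l a, Measurable (Z l a) := fun l a =>
        Finset.measurable_sum _ fun i _ =>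
          ((P.incr_measurable θ l i x a).mono (P.noise.sig_le _) le_rfl).sub_const _
      have hfm : ∀ a, Measurable (fluct a) := fun a =>
        Finset.measurable_sum _ fun l _ => (hZm l a).const_mul _
      have hZ : ∀ l ∈ Finset.range (k + 1), ∀ a, eLpNorm (Z l a) 2 μ ≤
          ENNReal.ofReal (√((M ^ (k + 1 - l) : ℕ) : ℝ) *
            (K * (1 + r⁻¹) * r ^ l * (lam * w x))) := by
        intro l hl a
        have hl := Finset.mem_range.1 hl
        refine eLpNorm_two_sum_centered_le (by positivity) (fun i => ?_) (fun i => ?_)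
          (fun i => ?_) fun i j hij => ?_
        · exact ((P.incr_measurable θ l i x a).mono (P.noise.sig_le _)
            le_rfl).aestronglyMeasurable
        · exact P.incr_bound hκK hr0 (fun _ => ih l hl) (fun _ => ih (l - 1) (by omega)) θ i x a
        · exact P.incr_mean (e := fun n => K * r ^ n) (fun n => by positivity) (ih l hl)
            (fun _ => ih (l - 1) (by omega)) θ i x a
        · exact indepFun_of_sig P.noise (disjoint_block θ (Or.inr hij))
            (P.incr_measurable θ l i x a) (P.incr_measurable θ l j x a)
      -- Averaging `M ^ j` pairwise independent samples gains the factor `M ^ (-j / 2)`.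
      have hscale : ∀ j : ℕ, ((M : ℝ) ^ j)⁻¹ * √((M ^ j : ℕ) : ℝ) = m ^ j := by
        intro j
        have h1 : √((M ^ j : ℕ) : ℝ) = √M ^ j := by
          rw [Nat.cast_pow, Real.sqrt_eq_iff_mul_self_eq (by positivity) (by positivity), ← mul_pow,
            Real.mul_self_sqrt (by positivity)]
        have hM0 : (0 : ℝ) < √M := by have := P.M_pos; positivity
        have h2 : (M : ℝ) = √M * √M := (Real.mul_self_sqrt (by positivity)).symm
        rw [h1, hm]
        nth_rewrite 1 [h2]
        rw [mul_pow, inv_pow]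
        field_simp
      have hfl : ∀ a, eLpNorm (fluct a) 2 μ ≤
          ENNReal.ofReal (s * w x * K * (1 + r⁻¹) * (r ^ (k + 1) * m / (r - m))) := by
        intro a
        refine (eLpNorm_two_sum_le (Finset.range (k + 1))
          (fun l _ => ((hZm l a).const_mul _).aestronglyMeasurable) (fun l _ => by positivity)
          fun l hl => eLpNorm_two_const_mul_le (by positivity) (hZ l hl a)).trans
          (ENNReal.ofReal_le_ofReal ?_)
        calc _ = lam * δ * w x * K * (1 + r⁻¹) *
              ∑ l ∈ Finset.range (k + 1), m ^ (k + 1 - l) * r ^ l := by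
              rw [Finset.mul_sum]
              refine Finset.sum_congr rfl fun l _ => ?_
              rw [← hscale]
              ring
          _ ≤ _ := by
              have := geom_conv_le hm0.le hmr (k + 1)
              have := P.le_s
              gcongr
      have hbias : ∀ a, |bias a| ≤ s * K * r ^ k * w x := by
        intro a
        have hk := ih k (by omega)
        have i1 := P.integrable_Q_comp (by positivity) hk (self_notMem_desc [0]) x a
        have i2 := P.integrable_q_comp [0] x a
        have h1 := abs_integral_le_of_eLpNorm_two (by positivity)
          (P.measurable_level k [0] [0] x a).aestronglyMeasurable
          (P.level_bound (by positivity) hk (self_notMem_desc [0]) x a)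
        rw [integral_sub i1 i2] at h1
        simp only [bias, D, abs_mul, abs_of_nonneg hδ]
        calc _ ≤ δ * (K * r ^ k * (lam * w x)) := by gcongr
          _ = lam * δ * K * r ^ k * w x := by ring
          _ ≤ _ := by
            have := P.le_s
            gcongr
      -- The maximum over `A` is bounded by the sum, which produces the factor `card A`.
      have hsum := eLpNorm_two_sum_le (μ := μ) Finset.univ
        (f := fun a ω => |fluct a ω|) (c := fun _ : A =>
          s * w x * K * (1 + r⁻¹) * (r ^ (k + 1) * m / (r - m)))
        (fun a _ => (hfm a).abs.aestronglyMeasurable) (fun a _ => by positivity)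
        (fun a _ => (eLpNorm_mono_real (g := fun ω => |fluct a ω|)
          (fun ω => by simp)).trans (by
            refine le_trans (le_of_eq ?_) (hfl a)
            exact eLpNorm_norm (fluct a)))
      have hconst : eLpNorm (fun _ : Ω => s * K * r ^ k * w x) 2 μ
          ≤ ENNReal.ofReal (s * K * r ^ k * w x) := by
        rw [eLpNorm_two_le_iff (by positivity)]
        simp
      have htot := eLpNorm_two_add_le
        (Finset.measurable_sum _ fun a _ => (hfm a).abs).aestronglyMeasurable
        measurable_const.aestronglyMeasurable
        (Finset.sum_nonneg fun a _ => by positivity) (by positivity) hsum hconst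
      refine (eLpNorm_mono_real fun ω => ?_).trans (htot.trans (ENNReal.ofReal_le_ofReal ?_))
      · rw [Real.norm_eq_abs]
        refine abs_iSup_le fun a => ?_
        rw [abs_abs, abs_sub_comm, hdecomp]
        refine (abs_add_le _ _).trans (add_le_add ?_ (hbias a))
        exact Finset.single_le_sum (f := fun a => |fluct a ω|) (fun a _ => abs_nonneg _)
          (Finset.mem_univ a)
      · rw [Finset.sum_const, Finset.card_univ, nsmul_eq_mul]
        have e : Fintype.card A * (s * w x * K * (1 + r⁻¹) * (r ^ (k + 1) * m / (r - m)))
            + s * K * r ^ k * w x = K * r ^ k * w x *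
              ((s * (r - m) + Fintype.card A * s * (r + 1) * m) / (r - m)) := by
          field_simp
          ring
        rw [e]
        calc _ ≤ K * r ^ k * w x * (r * (r - m) / (r - m)) := by gcongr
          _ = _ := by field_simp; ring

end Problem

end Error

/-! ### Rates and costs -/

section Rates

/-- The lower bound on `M` is the strict form, at `r = 1`, of the balance required for geometric
error decay; by continuity the balance persists for some `r < 1`. -/
lemma exists_rate {s c B : ℝ} (hs0 : 0 ≤ s) (hs1 : s < 1) (hc : 1 ≤ c)
    (hB : (1 + s * (2 * c - 1)) ^ 2 / (1 - s) ^ 2 < B) :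
    ∃ r, (√B)⁻¹ < r ∧ r < 1 ∧
      s * (r - (√B)⁻¹) + c * s * (r + 1) * (√B)⁻¹ ≤ r * (r - (√B)⁻¹) := by
  have hs : 0 < 1 - s := by linarith
  have h0 : 0 ≤ s * (2 * c - 1) := mul_nonneg hs0 (by linarith)
  have h1 : (1 + s * (2 * c - 1)) / (1 - s) < √B := by
    rw [Real.lt_sqrt (by positivity), div_pow]
    exact hB
  rw [div_lt_iff₀ hs] at h1
  have hb : 0 < √B := by
    by_contra! h
    nlinarith
  obtain ⟨m, hm⟩ : ∃ m, m = (√B)⁻¹ := ⟨_, rfl⟩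
  rw [← hm]
  have hm0 : 0 < m := by rw [hm]; positivity
  have hmb : m * √B = 1 := by rw [hm]; field_simp
  have h2 : m * (1 + s * (2 * c - 1)) < 1 - s := by
    have := mul_lt_mul_of_pos_left h1 hm0
    rwa [← mul_assoc, hmb, one_mul] at this
  have hm1 : m < 1 := by nlinarith
  have h3 : ∀ᶠ r in 𝓝 (1 : ℝ), s * (r - m) + c * s * (r + 1) * m < r * (r - m) := by
    refine ContinuousAt.eventually_lt (by fun_prop) (by fun_prop) ?_
    nlinarith
  have h4 : ∀ᶠ r in 𝓝[<] (1 : ℝ), m < r ∧ r < 1 ∧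
      s * (r - m) + c * s * (r + 1) * m < r * (r - m) := by
    filter_upwards [h3.filter_mono nhdsWithin_le_nhds,
      (eventually_gt_nhds hm1).filter_mono nhdsWithin_le_nhds, self_mem_nhdsWithin]
      with r h5 h6 h7
    exact ⟨h6, h7, h5⟩
  obtain ⟨r, h5, h6, h7⟩ := h4.exists
  exact ⟨r, h5, h6, h7.le⟩

lemma cost_le {M : ℕ} (hM : 0 < M) {R : ℝ} (hR : 0 ≤ R) {C : ℕ → ℝ}
    (hC : ∀ n, C n ≤ ∑ l ∈ Finset.range n, (M : ℝ) ^ (n - l) *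
      (R + C l + if l = 0 then 0 else C (l - 1))) (n : ℕ) :
    C n ≤ R * (4 * M) ^ n := by
  have hM1 : (1 : ℝ) ≤ M := by exact_mod_cast hM
  induction n using Nat.strong_induction_on with
  | _ n ih =>
    have hterm : ∀ l ∈ Finset.range n, (M : ℝ) ^ (n - l) *
        (R + C l + if l = 0 then 0 else C (l - 1)) ≤ R * (M : ℝ) ^ n * (3 * 4 ^ l) := by
      intro l hl
      have hl := Finset.mem_range.1 hl
      have h1 : R ≤ R * (4 * M : ℝ) ^ l :=
        le_mul_of_one_le_right hR (one_le_pow₀ (by linarith))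
      have h2 : (if l = 0 then 0 else C (l - 1)) ≤ R * (4 * M : ℝ) ^ l := by
        split_ifs with h
        · positivity
        · refine (ih (l - 1) (by omega)).trans ?_
          gcongr
          · linarith
          · omega
      calc _ ≤ (M : ℝ) ^ (n - l) * (3 * (R * (4 * M : ℝ) ^ l)) := by
            gcongr
            linarith [ih l hl]
        _ = R * ((M : ℝ) ^ (n - l) * (M : ℝ) ^ l) * (3 * 4 ^ l) := by rw [mul_pow]; ring
        _ = _ := by rw [← pow_add, Nat.sub_add_cancel hl.le]
    refine (hC n).trans ((Finset.sum_le_sum hterm).trans ?_)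
    rw [← Finset.mul_sum, ← Finset.mul_sum, geom_sum_eq (by norm_num)]
    rw [mul_pow]
    have : 0 ≤ R * (M : ℝ) ^ n := by positivity
    nlinarith

/-- If the error decays like `K r ^ n` and the cost grows like `L ^ n`, then accuracy `ε` is
reached at polynomial cost in `ε⁻¹`. -/
lemma exists_level {K r L : ℝ} (hK : 1 ≤ K) (hr : 0 < r) (hr1 : r < 1) (hL : 1 ≤ L) :
    ∃ (N : ℝ → ℕ) (c : ℝ), ∀ ε, 0 < ε → ε ≤ 1 → K * r ^ N ε ≤ ε ∧ L ^ N ε ≤ c * ε ^ (-c) := by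
  have hlr : 0 < -Real.log r := neg_pos.2 (Real.log_neg hr hr1)
  have hlL : 0 ≤ Real.log L := Real.log_nonneg hL
  obtain ⟨α, hα⟩ : ∃ α, α = Real.log L / -Real.log r := ⟨_, rfl⟩
  let t : ℝ → ℝ := fun ε => (Real.log K - Real.log ε) / -Real.log r
  refine ⟨fun ε => ⌈t ε⌉₊, max (L * Real.exp (α * Real.log K)) α, fun ε h0 h1 => ?_⟩
  have ht : 0 ≤ t ε := div_nonneg
    (sub_nonneg.2 ((Real.log_nonpos h0.le h1).trans (Real.log_nonneg hK))) hlr.le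
  have hN := Nat.le_ceil (t ε)
  have hN' := (Nat.ceil_lt_add_one ht).le
  constructor
  · rw [← le_div_iff₀' (by linarith), ← Real.log_le_log_iff (by positivity) (by positivity),
      Real.log_pow, Real.log_div h0.ne' (by linarith)]
    have := (div_le_iff₀ hlr).1 hN
    linarith
  · have hLpos : 0 < L := by linarith
    calc L ^ ⌈t ε⌉₊ = Real.exp (⌈t ε⌉₊ * Real.log L) := by
          rw [← Real.log_pow, Real.exp_log (by positivity)]
      _ ≤ Real.exp ((t ε + 1) * Real.log L) := by gcongr
      _ = L * Real.exp (α * Real.log K) * ε ^ (-α) := by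
          rw [Real.rpow_def_of_pos h0]
          nth_rewrite 2 [← Real.exp_log hLpos]
          rw [← Real.exp_add, ← Real.exp_add, hα]
          congr 1
          simp only [t]
          field_simp
          ring
      _ ≤ _ := by
          refine mul_le_mul (le_max_left _ _) ?_ (by positivity)
            (le_max_of_le_left (by positivity))
          exact Real.rpow_le_rpow_of_exponent_ge h0 h1 (neg_le_neg (le_max_right _ _))

end Rates

end MLFP

open MeasureTheory

/-- MLFP approximations for Bellman equations of optimal control problems (Corollary 4.2 of
the paper).  For a family of Markov decision problems indexed by `d ∈ 𝔇` with finite action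
set `A`, reward functions `g_d` with `max_b |g_d(x,b)| ≤ κ ω_d(x)`, discount factors `δ_d`,
weight moment bounds `λ_d` with `sup_d λ_d δ_d ≤ s < 1` (encoded by an upper bound `s`), and
`M > (1 + s(2|A|−1))²/(1−s)²`:
(i) each Bellman equation `Q_d(x,a) = g_d(x,a) + δ_d E[max_b Q_d(X_d^{0,x,a},b)]` has a unique
measurable solution with `sup_y max_b |Q_d(y,b)|/ω_d(y) < ∞`, and (ii) there are
`N : (0,1] → ℕ` and `c ∈ ℝ` with `𝔠_{N_ε,d} ≤ c ℜ_d ε^{−c}` and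
`sup_x (E[max_a |Q_d(x,a) − Q_{N_ε,d}^0(x,a)|²]/ω_d(x)²)^{1/2} ≤ ε`.
(`Θ = ⋃_n ℤ^n` is modelled by `List ℤ`, `(θ,l,i)` by `θ ++ [l,i]`, the index `0` by `[0]`.) -/
theorem stmt16
    {𝔇 : Type*} [Nonempty 𝔇]
    {A : Type*} [Fintype A] [Nonempty A]
    {Ω : Type*} [mΩ : MeasurableSpace Ω] (μ : Measure Ω) [IsProbabilityMeasure μ]
    (M : ℕ) (κ : ℝ) (hκ : 0 ≤ κ)
    {𝕏 : 𝔇 → Type*} [∀ d, MeasurableSpace (𝕏 d)] [∀ d, Nonempty (𝕏 d)]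
    (lam δ R : 𝔇 → ℝ)
    (hlam : ∀ d, 0 ≤ lam d) (hδ : ∀ d, 0 ≤ δ d) (hR : ∀ d, 0 ≤ R d)
    (w : ∀ d, 𝕏 d → ℝ) (hw_pos : ∀ d x, 0 < w d x) (hw_meas : ∀ d, Measurable (w d))
    (g : ∀ d, 𝕏 d → A → ℝ)
    (hg_meas : ∀ (d : 𝔇) (a : A), Measurable fun x => g d x a)
    (F : 𝔇 → List ℤ → MeasurableSpace Ω)
    (hFsub : ∀ d θ, F d θ ≤ mΩ)
    (hFindep : ∀ d, ProbabilityTheory.iIndep (F d) μ)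
    (X : ∀ d, List ℤ → 𝕏 d → A → Ω → 𝕏 d)
    (hXmeas : ∀ (d : 𝔇) (θ : List ℤ) (a : A),
      @Measurable (𝕏 d × Ω) (𝕏 d)
        ((inferInstance : MeasurableSpace (𝕏 d)).prod (F d θ)) inferInstance
        fun p => X d θ p.1 a p.2)
    (hXid : ∀ (d : 𝔇) (θ η : List ℤ),
      Measure.map (fun ω => fun p : 𝕏 d × A => X d θ p.1 p.2 ω) μ
        = Measure.map (fun ω => fun p : 𝕏 d × A => X d η p.1 p.2 ω) μ)
    (hg_bd : ∀ (d : 𝔇) (x : 𝕏 d), (⨆ b : A, |g d x b|) ≤ κ * w d x)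
    (hw_mom : ∀ (d : 𝔇) (x : 𝕏 d) (a : A),
      (∫⁻ ω, ENNReal.ofReal (w d (X d ([0]) x a ω) ^ 2) ∂μ)
        ≤ ENNReal.ofReal ((lam d * w d x) ^ 2))
    (s : ℝ) (hs : ∀ d, lam d * δ d ≤ s) (hs1 : s < 1)
    (hM : (1 + s * (2 * (Fintype.card A : ℝ) - 1)) ^ 2 / (1 - s) ^ 2 < (M : ℝ))
    (Q : ∀ d, ℕ → List ℤ → 𝕏 d → A → Ω → ℝ)
    (hQ : ∀ (d : 𝔇) (n : ℕ) (θ : List ℤ) (x : 𝕏 d) (a : A) (ω : Ω),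
      Q d n θ x a ω = g d x a +
        ∑ l ∈ Finset.range n, (δ d * ((M : ℝ) ^ (n - l))⁻¹) *
          ∑ i ∈ Finset.range (M ^ (n - l)),
            ((⨆ b : A, Q d l (θ ++ [(l : ℤ), (i : ℤ) + 1])
                (X d (θ ++ [(l : ℤ), (i : ℤ) + 1]) x a ω) b ω)
              - if l = 0 then 0 else
                ⨆ b : A, Q d (l - 1) (θ ++ [-(l : ℤ), (i : ℤ) + 1])
                  (X d (θ ++ [(l : ℤ), (i : ℤ) + 1]) x a ω) b ω))
    (C : ℕ → 𝔇 → ℝ) (hC_nonneg : ∀ n d, 0 ≤ C n d)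
    (hC_rec : ∀ (n : ℕ) (d : 𝔇),
      C n d ≤ ∑ l ∈ Finset.range n, (M : ℝ) ^ (n - l) *
        (R d + C l d + if l = 0 then 0 else C (l - 1) d)) :
    ∃ q : ∀ d : 𝔇, 𝕏 d → A → ℝ,
      (∀ d : 𝔇,
        (((∀ a : A, Measurable fun x => q d x a) ∧
            (∃ K : ℝ, ∀ y, (⨆ b : A, |q d y b|) ≤ K * w d y)) ∧
          ∀ (x : 𝕏 d) (a : A),
            Integrable (fun ω => ⨆ b : A, q d (X d ([0]) x a ω) b) μ ∧
              q d x a = g d x a + δ d * ∫ ω, ⨆ b : A, q d (X d ([0]) x a ω) b ∂μ) ∧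
        ∀ u : 𝕏 d → A → ℝ,
          (((∀ a : A, Measurable fun x => u x a) ∧
              (∃ K : ℝ, ∀ y, (⨆ b : A, |u y b|) ≤ K * w d y)) ∧
            ∀ (x : 𝕏 d) (a : A),
              Integrable (fun ω => ⨆ b : A, u (X d ([0]) x a ω) b) μ ∧
                u x a = g d x a + δ d * ∫ ω, ⨆ b : A, u (X d ([0]) x a ω) b ∂μ) →
            u = q d) ∧
      ∃ (N : ℝ → ℕ) (c : ℝ), ∀ (d : 𝔇) (ε : ℝ), 0 < ε → ε ≤ 1 →
        C (N ε) d ≤ c * R d * ε ^ (-c) ∧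
          ∀ x : 𝕏 d,
            (∫⁻ ω, ENNReal.ofReal ((⨆ a : A, |q d x a - Q d (N ε) ([0]) x a ω|) ^ 2) ∂μ)
              ≤ ENNReal.ofReal ((ε * w d x) ^ 2) := by
  obtain ⟨d₀⟩ := ‹Nonempty 𝔇›
  have hs0 : 0 ≤ s := (mul_nonneg (hlam d₀) (hδ d₀)).trans (hs d₀)
  have hs' : 0 < 1 - s := by linarith
  have hcard : (1 : ℝ) ≤ Fintype.card A := by exact_mod_cast Fintype.card_pos
  have hMpos : 0 < M := by
    have : (0 : ℝ) < M := lt_of_le_of_lt (by positivity) hM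
    exact_mod_cast this
  have noise : ∀ d, MLFP.Noise μ (F d) (X d) := fun d =>
    ⟨hFsub d, hFindep d, hXmeas d, hXid d⟩
  have hX0 := fun d => (noise d).meas_full [0]
  have hg : ∀ d x a, |g d x a| ≤ κ * w d x := fun d x a =>
    (MLFP.le_iSup_abs (fun b => g d x b) a).trans (hg_bd d x)
  choose q q_meas q_le q_fix using fun d => MLFP.exists_bellman_fixed (μ := μ) (hX0 d) (hw_meas d)
    (hw_pos d) (hlam d) (hδ d) (hw_mom d) (hs d) hs1 (hg_meas d) hκ (hg d)
  have P : ∀ d, MLFP.Problem μ (F d) (X d) (Q d) M (δ d) (lam d) s κ (κ / (1 - s)) (w d) (g d)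
      (q d) := fun d =>
    { noise := noise d
      mlfp := hQ d
      g_meas := hg_meas d
      w_meas := hw_meas d
      w_pos := hw_pos d
      lam_nonneg := hlam d
      δ_nonneg := hδ d
      mom := hw_mom d
      le_s := hs d
      M_pos := hMpos
      κ_nonneg := hκ
      g_le := hg d
      q_meas := q_meas d
      q_le := q_le d
      q_fix := q_fix d }
  refine ⟨q, fun d => ⟨⟨⟨q_meas d, κ / (1 - s), fun y => ciSup_le fun b => q_le d y b⟩,
    fun x a => ⟨(P d).integrable_q_comp [0] x a, q_fix d x a⟩⟩, ?_⟩, ?_⟩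
  · rintro u ⟨⟨u_meas, K, hK⟩, hu⟩
    exact MLFP.bellman_fixed_unique (μ := μ) (hX0 d) (hw_meas d) (hw_pos d) (hlam d) (hδ d)
      (hw_mom d) (hs d) hs1 u_meas (q_meas d)
      (fun x a => (MLFP.le_iSup_abs (fun b => u x b) a).trans (hK x)) (q_le d)
      (fun x a => (hu x a).2) (q_fix d)
  -- The rate `r` and the constant in the error bound depend only on `s`, `M`, `card A` and `κ`, so
  -- a single choice of levels serves all `d`.
  · obtain ⟨r, hmr, hr1, hbal⟩ := MLFP.exists_rate hs0 hs1 hcard hM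
    have hr0 : 0 < r := lt_of_le_of_lt (by positivity) hmr
    have hMone : (1 : ℝ) ≤ M := by exact_mod_cast hMpos
    have hq0 : 0 ≤ κ / (1 - s) := by positivity
    obtain ⟨N, c, hN⟩ := MLFP.exists_level (K := κ + κ / (1 - s) + 1) (r := r) (L := 4 * M)
      (by linarith) hr0 hr1 (by linarith)
    refine ⟨N, c, fun d ε h0 h1 => ?_⟩
    obtain ⟨hε, hcost⟩ := hN ε h0 h1
    constructor
    · calc C (N ε) d ≤ R d * (4 * M) ^ N ε :=
            MLFP.cost_le (C := fun n => C n d) hMpos (hR d) (fun n => hC_rec n d) _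
        _ ≤ R d * (c * ε ^ (-c)) := mul_le_mul_of_nonneg_left hcost (hR d)
        _ = _ := by ring
    · intro x
      have hw := (hw_pos d x).le
      refine (MLFP.eLpNorm_two_le_iff (by positivity)).1 (((P d).err_le
        (K := κ + κ / (1 - s) + 1) rfl hmr (by linarith) (by linarith) hbal (N ε) [0] x).trans (ENNReal.ofReal_le_ofReal ?_))
      exact mul_le_mul_of_nonneg_right hε hw
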